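/- arXiv:1511.05673 — 12 statements merged into one kernel-verified Lean document; each statement's English description precedes it below -/
import Mathlib

section
/- Let n ≥ 2, let G ⊊ ℝⁿ be a nonempty domain, let z, y ∈ G be such that the closed segment [z,y] is contained in G, and let x ∈ [z,y]. Then s_G(z,x) ≤ s_G(z,y). -/
open Set

/-- The triangular ratio metric `s_G(x,y) = sup_{z ∈ ∂G} |x-y|/(|x-z|+|z-y|)`. -/
noncomputable def triangularRatio {n : ℕ} (G : Set (EuclideanSpace ℝ (Fin n)))
    (x y : EuclideanSpace ℝ (Fin n)) : ℝ :=
  sSup ((fun z => dist x y / (dist x z + dist z y)) '' frontier G)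

/-!
The inequality holds separately at every boundary point `w`. Moving the endpoint from `x` on to `y`
adds `t = |x - y|` to the numerator `|z - x|`, because `x` lies between `z` and `y`, and adds at
most `t` to the denominator `|z - w| + |w - x|`, by the triangle inequality. A fraction that is at
most `1` does not decrease when the same `t ≥ 0` is added to its numerator and denominator.
-/

theorem div_le_add_div_add {K : Type*} [Field K] [LinearOrder K] [IsStrictOrderedRing K]
    {a b c : K} (ha : 0 ≤ a) (hab : a ≤ b) (hc : 0 ≤ c) : a / b ≤ (a + c) / (b + c) := by
  rcases (ha.trans hab).eq_or_lt with rfl | hb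
  · rw [div_zero]
    positivity
  · rw [div_le_div_iff₀ hb (by positivity)]
    calc a * (b + c) = a * b + a * c := mul_add a b c
      _ ≤ a * b + b * c := by gcongr
      _ = (a + c) * b := by ring

section PseudoMetricSpace

variable {X : Type*} [PseudoMetricSpace X]

/-- The quotient `|x - y| / (|x - w| + |w - y|)` whose supremum over the boundary points `w` is the
triangular ratio metric; it is `0` when `x`, `y` and `w` are at distance `0` from each other. -/
noncomputable def triangularQuotient (x y w : X) : ℝ :=
  dist x y / (dist x w + dist w y)

theorem triangularQuotient_le_one (x y w : X) : triangularQuotient x y w ≤ 1 :=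
  div_le_one_of_le₀ (dist_triangle x w y) (by positivity)

theorem bddAbove_triangularQuotient_image (x y : X) (A : Set X) :
    BddAbove (triangularQuotient x y '' A) :=
  ⟨1, forall_mem_image.2 fun w _ => triangularQuotient_le_one x y w⟩

theorem triangularQuotient_le_of_dist_add_dist {x y z : X}
    (h : dist z x + dist x y = dist z y) (w : X) :
    triangularQuotient z x w ≤ triangularQuotient z y w := by
  have hdenom : dist z w + dist w y ≤ dist z w + dist w x + dist x y := by
    linarith [dist_triangle w x y]
  rcases (dist_nonneg (x := z) (y := y)).eq_or_lt with hzy | hzy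
  · have hzx : dist z x = 0 := by
      linarith [dist_nonneg (x := z) (y := x), dist_nonneg (x := x) (y := y)]
    simp only [triangularQuotient, hzx, ← hzy, zero_div, le_refl]
  · calc dist z x / (dist z w + dist w x)
        ≤ (dist z x + dist x y) / (dist z w + dist w x + dist x y) :=
          div_le_add_div_add dist_nonneg (dist_triangle z w x) dist_nonneg
      _ = dist z y / (dist z w + dist w x + dist x y) := by rw [h]
      _ ≤ dist z y / (dist z w + dist w y) :=
          div_le_div_of_nonneg_left hzy.le (hzy.trans_le (dist_triangle z w y)) hdenom

theorem stmt_1_general {A : Set X} (hA : A.Nonempty) {x y z : X}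
    (h : dist z x + dist x y = dist z y) :
    sSup (triangularQuotient z x '' A) ≤ sSup (triangularQuotient z y '' A) :=
  csSup_le (hA.image _) <| forall_mem_image.2 fun w hw =>
    (triangularQuotient_le_of_dist_add_dist h w).trans <|
      le_csSup (bddAbove_triangularQuotient_image z y A) (mem_image_of_mem _ hw)

end PseudoMetricSpace

theorem stmt_1 (n : ℕ) (hn : 2 ≤ n) (G : Set (EuclideanSpace ℝ (Fin n)))
    (hGopen : IsOpen G) (hGconn : IsConnected G) (hGne : G ≠ Set.univ)
    (z y : EuclideanSpace ℝ (Fin n)) (hz : z ∈ G) (hy : y ∈ G)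
    (hseg : segment ℝ z y ⊆ G)
    (x : EuclideanSpace ℝ (Fin n)) (hx : x ∈ segment ℝ z y) :
    triangularRatio G z x ≤ triangularRatio G z y :=
  stmt_1_general (nonempty_frontier_iff.2 ⟨⟨z, hz⟩, hGne⟩) (dist_add_dist_of_mem_segment hx)
end

section
/- Let n ≥ 2, let G ⊊ ℝⁿ be a nonempty domain, let z ∈ G and r ∈ (0,1]. Then the triangular ratio metric ball B_s(z,r) = {y ∈ G : s_G(z,y) < r} is starlike with respect to z: for every y ∈ G with s_G(z,y) < r and every point w on the closed segment [z,y], one has w ∈ G and s_G(z,w) < r. -/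
open Set

/-!
Fix the centre `z`. For every single point `p`, the ratio `|z-y| / (|z-p| + |p-y|)` does not
increase when `y` is replaced by a point metrically between `z` and `y`: this uses only the
triangle inequality. Hence neither does the supremum over `p ∈ ∂G`. Moreover, a segment from
`z ∈ G` to a point outside `G` meets `∂G`, and a boundary point on the segment makes the supremum
at least `1`; so a point whose triangular ratio to `z` is less than `1` lies in `G`.
-/

theorem nonempty_inter_frontier_of_isPreconnected {X : Type*} [TopologicalSpace X] {s t : Set X}
    (hs : IsPreconnected s) (hst : (s ∩ t).Nonempty) (hstc : (s ∩ tᶜ).Nonempty) :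
    (s ∩ frontier t).Nonempty := by
  rw [frontier_eq_closure_inter_closure]
  have hcover : s ⊆ closure t ∪ closure tᶜ := fun x _ =>
    (em (x ∈ t)).imp (fun hx => subset_closure hx) (fun hx => subset_closure hx)
  exact isPreconnected_closed_iff.1 hs _ _ isClosed_closure isClosed_closure hcover
    (hst.mono (inter_subset_inter_right s subset_closure))
    (hstc.mono (inter_subset_inter_right s subset_closure))

section PseudoMetricSpace

variable {X : Type*} [PseudoMetricSpace X] {S : Set X} {x y z w p : X}

/-- The triangular ratio of `x` and `y` relative to a set `S`, which plays the role of the boundary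
`∂G` in the triangular ratio metric `s_G`. It takes the junk value `0` for `S = ∅`, and a term of
the supremum with vanishing denominator is `0`. -/
noncomputable def triangularRatioOn (S : Set X) (x y : X) : ℝ :=
  sSup ((fun p => dist x y / (dist x p + dist p y)) '' S)

theorem triangularRatioOn_le {c : ℝ} (hS : S.Nonempty)
    (h : ∀ p ∈ S, dist x y / (dist x p + dist p y) ≤ c) : triangularRatioOn S x y ≤ c :=
  csSup_le (hS.image _) (forall_mem_image.2 h)

theorem div_le_triangularRatioOn (hp : p ∈ S) :
    dist x y / (dist x p + dist p y) ≤ triangularRatioOn S x y :=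
  le_csSup ⟨1, forall_mem_image.2 fun q _ =>
    div_le_one_of_le₀ (dist_triangle x q y) (by positivity)⟩ (mem_image_of_mem _ hp)

theorem one_le_triangularRatioOn (hp : p ∈ S) (hxpy : dist x p + dist p y = dist x y)
    (hxy : dist x y ≠ 0) : 1 ≤ triangularRatioOn S x y := by
  simpa only [hxpy, div_self hxy] using div_le_triangularRatioOn (x := x) (y := y) hp

theorem dist_div_le_dist_div_of_dist_add_dist_eq (h : dist z w + dist w y = dist z y) (p : X) :
    dist z w / (dist z p + dist p w) ≤ dist z y / (dist z p + dist p y) := by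
  rcases (dist_nonneg (x := z) (y := w)).eq_or_lt with hzw | hzw
  · rw [← hzw, zero_div]
    positivity
  have hzpw : dist z w ≤ dist z p + dist p w := dist_triangle z p w
  have hzpy : dist z y ≤ dist z p + dist p y := dist_triangle z p y
  have hwy : 0 ≤ dist w y := dist_nonneg
  rw [div_le_div_iff₀ (by linarith) (by linarith)]
  calc dist z w * (dist z p + dist p y)
      ≤ dist z w * (dist z p + (dist p w + dist w y)) := by
        gcongr
        exact dist_triangle p w y
    _ = dist z w * (dist z p + dist p w) + dist z w * dist w y := by ring
    _ ≤ dist z w * (dist z p + dist p w) + (dist z p + dist p w) * dist w y := by gcongr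
    _ = (dist z w + dist w y) * (dist z p + dist p w) := by ring
    _ = dist z y * (dist z p + dist p w) := by rw [h]

theorem triangularRatioOn_le_of_dist_add_dist_eq (hS : S.Nonempty)
    (h : dist z w + dist w y = dist z y) : triangularRatioOn S z w ≤ triangularRatioOn S z y :=
  triangularRatioOn_le hS fun p hp =>
    (dist_div_le_dist_div_of_dist_add_dist_eq h p).trans (div_le_triangularRatioOn hp)

end PseudoMetricSpace

section NormedSpace

variable {E : Type*} [NormedAddCommGroup E] [NormedSpace ℝ E] {G : Set E} {z w : E}

theorem mem_of_triangularRatioOn_frontier_lt_one (hz : z ∈ G)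
    (h : triangularRatioOn (frontier G) z w < 1) : w ∈ G := by
  by_contra hw
  have hzw : z ≠ w := ne_of_mem_of_not_mem hz hw
  obtain ⟨p, hp_segment, hp_frontier⟩ := nonempty_inter_frontier_of_isPreconnected
    (convex_segment (𝕜 := ℝ) z w).isPreconnected
    ⟨z, left_mem_segment ℝ z w, hz⟩ ⟨w, right_mem_segment ℝ z w, hw⟩
  exact h.not_ge (one_le_triangularRatioOn hp_frontier
    (dist_add_dist_of_mem_segment hp_segment) (dist_ne_zero.2 hzw))

theorem stmt_2_general (hG : G ≠ univ) (hz : z ∈ G) {r : ℝ} (hr : r ≤ 1) :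
    StarConvex ℝ z {y ∈ G | triangularRatioOn (frontier G) z y < r} := by
  rw [starConvex_iff_segment_subset]
  rintro y ⟨-, hy⟩ w hw
  have hfrontier : (frontier G).Nonempty := nonempty_frontier_iff.2 ⟨⟨z, hz⟩, hG⟩
  have hwr : triangularRatioOn (frontier G) z w < r :=
    calc triangularRatioOn (frontier G) z w
        ≤ triangularRatioOn (frontier G) z y :=
          triangularRatioOn_le_of_dist_add_dist_eq hfrontier (dist_add_dist_of_mem_segment hw)
      _ < r := hy
  exact ⟨mem_of_triangularRatioOn_frontier_lt_one hz (hwr.trans_le hr), hwr⟩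

end NormedSpace

theorem stmt_2 (n : ℕ) (hn : 2 ≤ n) (G : Set (EuclideanSpace ℝ (Fin n)))
    (hGopen : IsOpen G) (hGconn : IsConnected G) (hGne : G ≠ Set.univ)
    (z : EuclideanSpace ℝ (Fin n)) (hz : z ∈ G) (r : ℝ) (hr : r ∈ Set.Ioc (0:ℝ) 1)
    (y : EuclideanSpace ℝ (Fin n)) (hy : y ∈ G) (hsy : triangularRatio G z y < r)
    (w : EuclideanSpace ℝ (Fin n)) (hw : w ∈ segment ℝ z y) :
    w ∈ G ∧ triangularRatio G z w < r :=
  (stmt_2_general hGne hz hr.2).segment_subset ⟨hy, hsy⟩ hw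
end

section
/- Let n ≥ 2, let G ⊊ ℝⁿ be a nonempty domain, let x ∈ G and let r ∈ (0, 1/2]. Then the triangular ratio metric ball B_s(x,r) = {y ∈ G : s_G(x,y) < r} is a convex subset of ℝⁿ. -/
/-!
Fix `x` and a boundary point `z`. For `t < 1` the set of all `y` with
`|x - y| ≤ t (|x - z| + |z - y|)` is the region inside a limaçon: in polar coordinates
`y = x + ρ u` it reads `(1 - t ^ 2) ρ ≤ 2 t (|z - x| - t ⟪u, z - x⟫)`. For `t ≤ 1 / 2` the limaçon
has no dimple, so the region is the intersection of the half-spaces supporting it. A closed ball of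
the triangular ratio metric of radius `t < 1` is the intersection of these regions over
`z ∈ ∂G`: a point outside `G` is joined to `x` by a segment meeting `∂G`, which gives ratio `1`.
The open ball is the increasing union of the closed ones.
-/

open Set

open NormedSpace (norm_smul_normalize norm_normalize_eq_one_iff normalize_zero_eq_zero)
open scoped RealInnerProductSpace

lemma norm_normalize_le_one {V : Type*} [NormedAddCommGroup V] [NormedSpace ℝ V] (v : V) :
    ‖NormedSpace.normalize v‖ ≤ 1 := by
  rcases eq_or_ne v 0 with rfl | hv
  · simp
  · exact (norm_normalize_eq_one_iff.mpr hv).le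

section Limacon

variable {E : Type*} [NormedAddCommGroup E] [InnerProductSpace ℝ E] {z : E} {t : ℝ}

lemma real_inner_normalize_le_norm (v z : E) : ⟪NormedSpace.normalize v, z⟫ ≤ ‖z‖ :=
  (real_inner_le_norm _ _).trans
    (mul_le_of_le_one_left (norm_nonneg z) (norm_normalize_le_one v))

lemma norm_mul_real_inner_normalize (v z : E) :
    ‖v‖ * ⟪NormedSpace.normalize v, z⟫ = ⟪v, z⟫ := by
  rw [← real_inner_smul_left, norm_smul_normalize]

lemma real_inner_normalize_self (v : E) : ⟪v, NormedSpace.normalize v⟫ = ‖v‖ := by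
  rcases eq_or_ne v 0 with rfl | hv
  · simp
  · rw [NormedSpace.normalize, real_inner_smul_right, real_inner_self_eq_norm_sq]
    field_simp

/-- The closed region bounded by a limaçon with pole at the origin. For `z ≠ 0` and
`t < 1` it is the closed ball with center `0` and radius `t` for the triangular ratio metric of
`{z}ᶜ`. The usual polar equation is `mem_limaconRegion_iff`. -/
def limaconRegion (z : E) (t : ℝ) : Set E :=
  {v | ‖v‖ ≤ t * (‖z‖ + ‖v - z‖)}

lemma mem_limaconRegion_iff (ht₀ : 0 ≤ t) (ht₁ : t ≤ 1) {v : E} :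
    v ∈ limaconRegion z t ↔
      (1 - t ^ 2) * ‖v‖ ≤ 2 * t * (‖z‖ - t * ⟪NormedSpace.normalize v, z⟫) := by
  have h_inner : ‖v‖ * ⟪NormedSpace.normalize v, z⟫ = ⟪v, z⟫ := norm_mul_real_inner_normalize v z
  have h_inner_le : ⟪NormedSpace.normalize v, z⟫ ≤ ‖z‖ := real_inner_normalize_le_norm v z
  have h_dist : ‖v - z‖ ^ 2 = ‖v‖ ^ 2 - 2 * ⟪v, z⟫ + ‖z‖ ^ 2 := norm_sub_sq_real v z
  rw [limaconRegion, mem_ofPred_eq]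
  rcases le_total ‖v‖ (t * ‖z‖) with h_near | h_far
  · have h_rhs : (1 - t ^ 2) * ‖v‖ ≤ 2 * t * (‖z‖ - t * ⟪NormedSpace.normalize v, z⟫) := calc
      (1 - t ^ 2) * ‖v‖ ≤ (1 - t ^ 2) * (t * ‖z‖) := by gcongr; nlinarith
      _ = (1 + t) * (t * (1 - t) * ‖z‖) := by ring
      _ ≤ 2 * (t * (1 - t) * ‖z‖) := by
        have : 0 ≤ 1 - t := sub_nonneg.mpr ht₁
        gcongr
        linarith
      _ = 2 * t * (‖z‖ - t * ‖z‖) := by ring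
      _ ≤ 2 * t * (‖z‖ - t * ⟪NormedSpace.normalize v, z⟫) := by gcongr
    refine iff_of_true (h_near.trans ?_) h_rhs
    gcongr
    exact le_add_of_nonneg_right (norm_nonneg _)
  · rcases (norm_nonneg v).eq_or_lt with hv | hv
    · obtain rfl : v = 0 := norm_eq_zero.mp hv.symm
      simp only [norm_zero, normalize_zero_eq_zero, inner_zero_left, mul_zero, sub_zero]
      exact iff_of_true (by positivity) (by positivity)
    calc ‖v‖ ≤ t * (‖z‖ + ‖v - z‖)
        ↔ ‖v‖ - t * ‖z‖ ≤ t * ‖v - z‖ := by rw [mul_add, sub_le_iff_le_add']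
      _ ↔ (‖v‖ - t * ‖z‖) ^ 2 ≤ (t * ‖v - z‖) ^ 2 :=
        (sq_le_sq₀ (sub_nonneg.mpr h_far) (by positivity)).symm
      _ ↔ ‖v‖ * ((1 - t ^ 2) * ‖v‖) ≤
          ‖v‖ * (2 * t * (‖z‖ - t * ⟪NormedSpace.normalize v, z⟫)) := by
        rw [mul_pow, h_dist, ← h_inner, ← sub_nonneg, ← sub_nonneg (b := ‖v‖ * _)]
        ring_nf
      _ ↔ _ := mul_le_mul_iff_right₀ hv

/-- A normal vector, at the boundary point of `limaconRegion z t` in the unit direction `e`, of the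
hyperplane supporting the region there. It is the gradient of `‖y‖ ^ 2 / (‖z‖ * ‖y‖ - t * ⟪y, z⟫)`,
scaled by `(‖z‖ - t * ⟪e, z⟫) ^ 2`. -/
noncomputable def limaconNormal (z : E) (t : ℝ) (e : E) : E :=
  (‖z‖ - 2 * t * ⟪e, z⟫) • e + t • z

lemma real_inner_limaconNormal_normalize (z : E) (t : ℝ) (y : E) :
    ⟪y, limaconNormal z t (NormedSpace.normalize y)⟫ =
      ‖y‖ * (‖z‖ - t * ⟪NormedSpace.normalize y, z⟫) := by
  rw [limaconNormal, inner_add_right, real_inner_smul_right, real_inner_smul_right,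
    real_inner_normalize_self, ← norm_mul_real_inner_normalize y z]
  ring

lemma real_inner_limaconNormal_le {e : E} (ht₀ : 0 ≤ t) (ht : t ≤ 1 / 2) (he : ‖e‖ ≤ 1) (v : E) :
    ⟪v, limaconNormal z t e⟫ ≤
      ‖v‖ * (‖z‖ - 2 * t * ⟪e, z⟫ + t * ⟪NormedSpace.normalize v, z⟫) := by
  have h_coeff : 0 ≤ ‖z‖ - 2 * t * ⟪e, z⟫ := by
    have h_inner : ⟪e, z⟫ ≤ ‖z‖ :=
      (real_inner_le_norm e z).trans (mul_le_of_le_one_left (norm_nonneg z) he)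
    nlinarith [norm_nonneg z]
  have h_inner : ⟪v, e⟫ ≤ ‖v‖ :=
    (real_inner_le_norm v e).trans (mul_le_of_le_one_right (norm_nonneg v) he)
  calc ⟪v, limaconNormal z t e⟫
      = (‖z‖ - 2 * t * ⟪e, z⟫) * ⟪v, e⟫ + t * ⟪v, z⟫ := by
        rw [limaconNormal, inner_add_right, real_inner_smul_right, real_inner_smul_right]
    _ ≤ (‖z‖ - 2 * t * ⟪e, z⟫) * ‖v‖ + t * ⟪v, z⟫ := by gcongr
    _ = ‖v‖ * (‖z‖ - 2 * t * ⟪e, z⟫ + t * ⟪NormedSpace.normalize v, z⟫) := by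
        rw [← norm_mul_real_inner_normalize v z]; ring

lemma limaconRegion_subset_halfSpace {e : E} (ht₀ : 0 ≤ t) (ht : t ≤ 1 / 2) (he : ‖e‖ ≤ 1) :
    limaconRegion z t ⊆
      {v | (1 - t ^ 2) * ⟪v, limaconNormal z t e⟫ ≤ 2 * t * (‖z‖ - t * ⟪e, z⟫) ^ 2} := by
  intro v hv
  rw [mem_limaconRegion_iff ht₀ (by linarith)] at hv
  have h_coeff : 0 ≤ 1 - t ^ 2 := by nlinarith
  set p := ⟪e, z⟫
  set q := ⟪NormedSpace.normalize v, z⟫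
  have h_normal : (1 - t ^ 2) * ⟪v, limaconNormal z t e⟫
      ≤ (1 - t ^ 2) * ‖v‖ * (‖z‖ - 2 * t * p + t * q) := by
    rw [mul_assoc]
    exact mul_le_mul_of_nonneg_left (real_inner_limaconNormal_le ht₀ ht he v) h_coeff
  refine h_normal.trans ?_
  rcases le_total (‖z‖ - 2 * t * p + t * q) 0 with h_neg | h_nonneg
  · exact (mul_nonpos_of_nonneg_of_nonpos (by positivity) h_neg).trans (by positivity)
  -- AM-GM: the factors `‖z‖ - t * q` and `‖z‖ - 2 * t * p + t * q` have mean `‖z‖ - t * p`.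
  have h_amgm : (‖z‖ - t * q) * (‖z‖ - 2 * t * p + t * q) ≤ (‖z‖ - t * p) ^ 2 := by
    linarith [sq_nonneg (t * (p - q))]
  calc (1 - t ^ 2) * ‖v‖ * (‖z‖ - 2 * t * p + t * q)
      ≤ 2 * t * (‖z‖ - t * q) * (‖z‖ - 2 * t * p + t * q) := by gcongr
    _ = 2 * t * ((‖z‖ - t * q) * (‖z‖ - 2 * t * p + t * q)) := mul_assoc _ _ _
    _ ≤ 2 * t * (‖z‖ - t * p) ^ 2 := by gcongr

theorem convex_limaconRegion (hz : z ≠ 0) (ht₀ : 0 ≤ t) (ht : t ≤ 1 / 2) :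
    Convex ℝ (limaconRegion z t) := by
  intro a ha b hb α β hα hβ hαβ
  set y := α • a + β • b
  set e := NormedSpace.normalize y
  have h_subset := limaconRegion_subset_halfSpace (z := z) ht₀ ht (norm_normalize_le_one y)
  have h_halfSpace : Convex ℝ
      {v | (1 - t ^ 2) * ⟪v, limaconNormal z t e⟫ ≤ 2 * t * (‖z‖ - t * ⟪e, z⟫) ^ 2} :=
    convex_halfSpace_le
      ⟨fun v w => by rw [inner_add_left, mul_add],
        fun c v => by rw [real_inner_smul_left, mul_left_comm, smul_eq_mul]⟩ _
  have hy : (1 - t ^ 2) * ‖y‖ * (‖z‖ - t * ⟪e, z⟫)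
      ≤ 2 * t * (‖z‖ - t * ⟪e, z⟫) * (‖z‖ - t * ⟪e, z⟫) := calc
    (1 - t ^ 2) * ‖y‖ * (‖z‖ - t * ⟪e, z⟫) = (1 - t ^ 2) * ⟪y, limaconNormal z t e⟫ := by
      rw [real_inner_limaconNormal_normalize, mul_assoc]
    _ ≤ 2 * t * (‖z‖ - t * ⟪e, z⟫) ^ 2 := h_halfSpace (h_subset ha) (h_subset hb) hα hβ hαβ
    _ = 2 * t * (‖z‖ - t * ⟪e, z⟫) * (‖z‖ - t * ⟪e, z⟫) := by rw [sq, ← mul_assoc]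
  have h_pos : 0 < ‖z‖ - t * ⟪e, z⟫ := by
    nlinarith [norm_pos_iff.mpr hz, real_inner_normalize_le_norm y z]
  exact (mem_limaconRegion_iff ht₀ (by linarith)).mpr (le_of_mul_le_mul_right hy h_pos)

theorem convex_setOf_dist_le_mul_dist_add_dist {x z : E} (hxz : x ≠ z) (ht₀ : 0 ≤ t)
    (ht : t ≤ 1 / 2) : Convex ℝ {y | dist x y ≤ t * (dist x z + dist z y)} := by
  have h_preimage : {y | dist x y ≤ t * (dist x z + dist z y)} =
      (fun y => y + -x) ⁻¹' limaconRegion (z - x) t := by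
    ext y
    rw [mem_preimage, ← sub_eq_add_neg, limaconRegion, mem_ofPred_eq, mem_ofPred_eq,
      sub_sub_sub_cancel_right, dist_comm x y, dist_comm x z, dist_comm z y,
      dist_eq_norm, dist_eq_norm, dist_eq_norm]
  rw [h_preimage]
  exact (convex_limaconRegion (sub_ne_zero.mpr hxz.symm) ht₀ ht).translate_preimage_left _

end Limacon

section TriangularRatio

/-- The triangular ratio metric of a subset of an arbitrary metric space. On Euclidean space it is
definitionally `triangularRatio`. -/
noncomputable def triangularRatioDist {X : Type*} [PseudoMetricSpace X] (G : Set X) (x y : X) : ℝ :=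
  sSup ((fun z => dist x y / (dist x z + dist z y)) '' frontier G)

section Metric

variable {X : Type*} [PseudoMetricSpace X] {G : Set X} {x y : X} {t : ℝ}

lemma triangularRatioDist_nonneg (G : Set X) (x y : X) : 0 ≤ triangularRatioDist G x y := by
  refine Real.sSup_nonneg ?_
  rintro _ ⟨z, -, rfl⟩
  positivity

lemma triangularRatioDist_le_iff (hG : (frontier G).Nonempty) (hx : x ∉ frontier G) :
    triangularRatioDist G x y ≤ t ↔
      ∀ z ∈ frontier G, dist x y ≤ t * (dist x z + dist z y) := by
  have h_bdd : BddAbove ((fun z => dist x y / (dist x z + dist z y)) '' frontier G) := by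
    refine ⟨1, ?_⟩
    rintro _ ⟨z, -, rfl⟩
    exact div_le_one_of_le₀ (dist_triangle x z y) (by positivity)
  rw [triangularRatioDist, csSup_le_iff h_bdd (hG.image _), forall_mem_image]
  refine forall₂_congr fun z hz => div_le_iff₀ ?_
  have h_dist : 0 < dist x z := dist_nonneg.lt_of_ne' fun h =>
    hx (((Metric.inseparable_iff.mpr h).mem_closed_iff isClosed_frontier).mpr hz)
  positivity

end Metric

lemma inter_frontier_nonempty_of_isPreconnected {X : Type*} [TopologicalSpace X] {s G : Set X}
    (hs : IsPreconnected s) (h_inter : (s ∩ G).Nonempty) (h_compl : (s ∩ Gᶜ).Nonempty) :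
    (s ∩ frontier G).Nonempty := by
  by_contra h_empty
  have h_cover : s ⊆ interior G ∪ interior Gᶜ := by
    rw [← compl_frontier_eq_union_interior, subset_compl_iff_disjoint_right]
    exact disjoint_iff_inter_eq_empty.mpr (not_nonempty_iff_eq_empty.mp h_empty)
  obtain ⟨x, hxs, hxG⟩ := h_inter
  obtain ⟨y, hys, hyG⟩ := h_compl
  have hx : x ∈ interior G := (h_cover hxs).resolve_right fun h => interior_subset h hxG
  have hy : y ∈ interior Gᶜ := (h_cover hys).resolve_left fun h => hyG (interior_subset h)
  obtain ⟨w, -, hwG, hwGc⟩ :=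
    hs _ _ isOpen_interior isOpen_interior h_cover ⟨x, hxs, hx⟩ ⟨y, hys, hy⟩
  exact interior_subset hwGc (interior_subset hwG)

lemma mem_of_forall_mem_frontier_dist_le {E : Type*} [NormedAddCommGroup E] [NormedSpace ℝ E]
    {G : Set E} {x y : E} {t : ℝ} (hx : x ∈ G) (ht : t < 1)
    (h : ∀ z ∈ frontier G, dist x y ≤ t * (dist x z + dist z y)) : y ∈ G := by
  by_contra hy
  obtain ⟨z, hz_segment, hz_frontier⟩ : (segment ℝ x y ∩ frontier G).Nonempty :=
    inter_frontier_nonempty_of_isPreconnected (convex_segment x y).isPreconnected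
      ⟨x, left_mem_segment ℝ x y, hx⟩ ⟨y, right_mem_segment ℝ x y, hy⟩
  have h_le : dist x y ≤ t * dist x y := by
    simpa only [dist_add_dist_of_mem_segment hz_segment] using h z hz_frontier
  have h_pos : 0 < dist x y := dist_pos.mpr (ne_of_mem_of_not_mem hx hy)
  exact h_le.not_gt (mul_lt_of_lt_one_left h_pos ht)

variable {E : Type*} [NormedAddCommGroup E] [InnerProductSpace ℝ E] {G : Set E} {x : E}

theorem convex_setOf_triangularRatioDist_le (hGopen : IsOpen G) (hGne : G ≠ univ) (hx : x ∈ G)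
    {t : ℝ} (ht₀ : 0 ≤ t) (ht : t ≤ 1 / 2) :
    Convex ℝ {y | y ∈ G ∧ triangularRatioDist G x y ≤ t} := by
  have h_frontier : (frontier G).Nonempty := nonempty_frontier_iff.mpr ⟨⟨x, hx⟩, hGne⟩
  have hx_frontier : x ∉ frontier G := fun h => hGopen.inter_frontier_eq.le ⟨hx, h⟩
  have h_inter : {y | y ∈ G ∧ triangularRatioDist G x y ≤ t} =
      ⋂ z ∈ frontier G, {y | dist x y ≤ t * (dist x z + dist z y)} := by
    ext y
    simp only [mem_ofPred_eq, mem_iInter, triangularRatioDist_le_iff h_frontier hx_frontier]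
    exact and_iff_right_of_imp (mem_of_forall_mem_frontier_dist_le hx (by linarith))
  rw [h_inter]
  exact convex_iInter₂ fun z hz =>
    convex_setOf_dist_le_mul_dist_add_dist (ne_of_mem_of_not_mem hz hx_frontier).symm ht₀ ht

theorem stmt_3_general (hGopen : IsOpen G) (hGne : G ≠ univ) (hx : x ∈ G) {r : ℝ}
    (hr : r ≤ 1 / 2) : Convex ℝ {y | y ∈ G ∧ triangularRatioDist G x y < r} := by
  rintro a ⟨haG, ha⟩ b ⟨hbG, hb⟩ α β hα hβ hαβ
  set t := max (triangularRatioDist G x a) (triangularRatioDist G x b)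
  have htr : t < r := max_lt ha hb
  have ht₀ : 0 ≤ t := le_max_of_le_left (triangularRatioDist_nonneg G x a)
  have h_closedBall : Convex ℝ {y | y ∈ G ∧ triangularRatioDist G x y ≤ t} :=
    convex_setOf_triangularRatioDist_le hGopen hGne hx ht₀ (htr.le.trans hr)
  obtain ⟨h_mem, h_le⟩ :=
    h_closedBall ⟨haG, le_max_left _ _⟩ ⟨hbG, le_max_right _ _⟩ hα hβ hαβ
  exact ⟨h_mem, h_le.trans_lt htr⟩

end TriangularRatio

theorem stmt_3 (n : ℕ) (hn : 2 ≤ n) (G : Set (EuclideanSpace ℝ (Fin n)))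
    (hGopen : IsOpen G) (hGconn : IsConnected G) (hGne : G ≠ Set.univ)
    (x : EuclideanSpace ℝ (Fin n)) (hx : x ∈ G) (r : ℝ)
    (hr : r ∈ Set.Ioc (0:ℝ) (1/2)) :
    Convex ℝ {y | y ∈ G ∧ triangularRatio G x y < r} :=
  stmt_3_general hGopen hGne hx hr.2
end

section
/- Let n ≥ 2, x ∈ ℝⁿ \ {0} and r ∈ (0,π]. If y ∈ ℝⁿ \ {0} satisfies |x−y|/(|x|+|y|) < sin(r/2), then ∠(x,0,y) < r. That is, B_s(x, sin(r/2)) ⊂ B_v(x,r) in ℝⁿ \ {0}. -/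
/-!
Let `θ` be the angle between `x` and `y`. Along the bisector of that angle and the normal to it,
`x - y` has components `(‖x‖ - ‖y‖) cos (θ / 2)` and `(‖x‖ + ‖y‖) sin (θ / 2)`. Discarding the
first gives `sin (θ / 2) ≤ s(x, y)`, and the sine is monotone on `[0, π / 2]`.
-/

section InnerProductSpace

open InnerProductGeometry

variable {V : Type*} [NormedAddCommGroup V] [InnerProductSpace ℝ V]

theorem norm_sub_sq_eq_sin_half_angle_sq_add_cos_half_angle_sq (x y : V) :
    ‖x - y‖ ^ 2 = (Real.sin (angle x y / 2) * (‖x‖ + ‖y‖)) ^ 2 +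
      (Real.cos (angle x y / 2) * (‖x‖ - ‖y‖)) ^ 2 := by
  rw [norm_sub_sq_real, ← cos_angle_mul_norm_mul_norm, mul_pow, mul_pow,
    Real.sin_sq_eq_half_sub, Real.cos_sq, mul_div_cancel₀ _ two_ne_zero]
  ring

theorem sin_half_angle_mul_norm_add_norm_le_norm_sub (x y : V) :
    Real.sin (angle x y / 2) * (‖x‖ + ‖y‖) ≤ ‖x - y‖ := by
  refine le_of_sq_le_sq ?_ (norm_nonneg _)
  rw [norm_sub_sq_eq_sin_half_angle_sq_add_cos_half_angle_sq]
  exact le_add_of_nonneg_right (sq_nonneg _)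

end InnerProductSpace

section EuclideanAffineSpace

open scoped EuclideanGeometry

variable {V P : Type*} [NormedAddCommGroup V] [InnerProductSpace ℝ V] [MetricSpace P]
  [NormedAddTorsor V P]

theorem sin_half_angle_mul_dist_add_dist_le_dist (x p y : P) :
    Real.sin (∠ x p y / 2) * (dist x p + dist y p) ≤ dist x y := by
  simpa only [EuclideanGeometry.angle, dist_eq_norm_vsub V, vsub_sub_vsub_cancel_right] using
    sin_half_angle_mul_norm_add_norm_le_norm_sub (x -ᵥ p) (y -ᵥ p)

theorem stmt_7_general {x p y : P} {r : ℝ} (hx : x ≠ p) (hr : 0 ≤ r)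
    (hs : dist x y / (dist x p + dist y p) < Real.sin (r / 2)) : ∠ x p y < r := by
  by_contra! r_le_angle
  have sum_pos : 0 < dist x p + dist y p := add_pos_of_pos_of_nonneg (dist_pos.mpr hx) dist_nonneg
  have sin_le_sin : Real.sin (r / 2) ≤ Real.sin (∠ x p y / 2) :=
    Real.sin_le_sin_of_le_of_le_pi_div_two (by linarith [Real.pi_pos])
      (by linarith [EuclideanGeometry.angle_le_pi x p y]) (by linarith)
  have sin_le_ratio : Real.sin (∠ x p y / 2) ≤ dist x y / (dist x p + dist y p) :=
    (le_div_iff₀ sum_pos).mpr (sin_half_angle_mul_dist_add_dist_le_dist x p y)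
  exact (sin_le_sin.trans sin_le_ratio).not_gt hs

end EuclideanAffineSpace

theorem stmt_7 (n : ℕ) (hn : 2 ≤ n) (x : EuclideanSpace ℝ (Fin n)) (hx : x ≠ 0)
    (r : ℝ) (hr : r ∈ Set.Ioc (0:ℝ) Real.pi)
    (y : EuclideanSpace ℝ (Fin n)) (hy : y ≠ 0)
    (hs : dist x y / (‖x‖ + ‖y‖) < Real.sin (r / 2)) :
    EuclideanGeometry.angle x 0 y < r := by
  simp only [← dist_zero_right] at hs
  exact stmt_7_general hx hr.1.le hs
end

section
/- Let n ≥ 2, x ∈ ℝⁿ \ {0} and r ∈ (0,π]. For every y ∈ ℝⁿ \ {0} with ∠(x,0,y) = r one has |x−y|/(|x|+|y|) ≥ sin(r/2), and equality holds when |y| = |x|. Hence the radius sin(r/2) in the inclusion B_s(x, sin(r/2)) ⊂ B_v(x,r) is best possible. -/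
/-!
Rewriting `cos θ` through the half angle turns the law of cosines into
`dist x y ^ 2 = ((a + b) * sin (θ / 2)) ^ 2 + ((a - b) * cos (θ / 2)) ^ 2`, where `a` and `b` are
the distances of `x` and `y` from the vertex of the angle `θ`. Dropping the second square gives the
lower bound, and this square vanishes when `a = b`.
-/

section HalfAngle

open EuclideanGeometry Real

variable {V P : Type*} [NormedAddCommGroup V] [InnerProductSpace ℝ V] [MetricSpace P]
  [NormedAddTorsor V P]

theorem sin_half_angle_nonneg (x p y : P) : 0 ≤ sin (∠ x p y / 2) :=
  sin_nonneg_of_nonneg_of_le_pi (div_nonneg (angle_nonneg x p y) zero_le_two)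
    ((half_le_self (angle_nonneg x p y)).trans (angle_le_pi x p y))

theorem dist_sq_eq_sq_sin_half_angle_add_sq_cos_half_angle (x p y : P) :
    dist x y ^ 2 = ((dist x p + dist y p) * sin (∠ x p y / 2)) ^ 2 +
      ((dist x p - dist y p) * cos (∠ x p y / 2)) ^ 2 := by
  have cos_eq : cos (∠ x p y) = cos (∠ x p y / 2) ^ 2 - sin (∠ x p y / 2) ^ 2 := by
    rw [← cos_two_mul', mul_div_cancel₀ _ two_ne_zero]
  have law_cos := EuclideanGeometry.law_cos x p y
  rw [cos_eq] at law_cos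
  linear_combination law_cos -
    (dist x p ^ 2 + dist y p ^ 2) * sin_sq_add_cos_sq (∠ x p y / 2)

theorem add_dist_mul_sin_half_angle_le_dist (x p y : P) :
    (dist x p + dist y p) * sin (∠ x p y / 2) ≤ dist x y := by
  refine le_of_sq_le_sq ?_ dist_nonneg
  rw [dist_sq_eq_sq_sin_half_angle_add_sq_cos_half_angle x p y]
  exact le_add_of_nonneg_right (sq_nonneg _)

theorem dist_eq_two_mul_dist_mul_sin_half_angle {x p y : P} (h : dist y p = dist x p) :
    dist x y = 2 * dist x p * sin (∠ x p y / 2) := by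
  have chord_nonneg : 0 ≤ 2 * dist x p * sin (∠ x p y / 2) :=
    mul_nonneg (by positivity) (sin_half_angle_nonneg x p y)
  rw [← sq_eq_sq₀ dist_nonneg chord_nonneg,
    dist_sq_eq_sq_sin_half_angle_add_sq_cos_half_angle x p y, h]
  ring

theorem stmt_8_general {x p y : P} (hx : x ≠ p) (hy : y ≠ p) :
    sin (∠ x p y / 2) ≤ dist x y / (dist x p + dist y p) ∧
      (dist y p = dist x p → dist x y / (dist x p + dist y p) = sin (∠ x p y / 2)) := by
  have add_dist_pos : 0 < dist x p + dist y p := add_pos (dist_pos.2 hx) (dist_pos.2 hy)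
  constructor
  · rw [le_div_iff₀' add_dist_pos]
    exact add_dist_mul_sin_half_angle_le_dist x p y
  · intro h
    rw [div_eq_iff add_dist_pos.ne', dist_eq_two_mul_dist_mul_sin_half_angle h, h]
    ring

end HalfAngle

theorem stmt_8 (n : ℕ) (hn : 2 ≤ n) (x : EuclideanSpace ℝ (Fin n)) (hx : x ≠ 0)
    (r : ℝ) (hr : r ∈ Set.Ioc (0:ℝ) Real.pi)
    (y : EuclideanSpace ℝ (Fin n)) (hy : y ≠ 0)
    (hangle : EuclideanGeometry.angle x 0 y = r) :
    Real.sin (r / 2) ≤ dist x y / (‖x‖ + ‖y‖) ∧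
      (‖y‖ = ‖x‖ → dist x y / (‖x‖ + ‖y‖) = Real.sin (r / 2)) := by
  simpa only [dist_zero_right, hangle] using stmt_8_general hx hy
end

section
/- Let n ≥ 2, x ∈ ℝⁿ \ {0} and r ∈ (0,π]. If y ∈ ℝⁿ \ {0} satisfies log(1 + |x−y|/min(|x|,|y|)) < log(1 + 2 sin(r/2)), then ∠(x,0,y) < r. That is, B_j(x, log(1+2 sin(r/2))) ⊂ B_v(x,r) in ℝⁿ \ {0}. -/
/-!
Half-angle form of the law of cosines: with `a = dist x p`, `b = dist y p` and `θ = ∠ x p y`,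
`dist x y ^ 2 = (a - b) ^ 2 + 4 * a * b * sin (θ / 2) ^ 2`. Dropping the square and using
`min a b ^ 2 ≤ a * b` shows that `dist x y` is at least the chord `2 * sin (θ / 2) * min a b` cut
off by the angle on the smaller of the two circles about `p`. As `sin (· / 2)` increases on
`[0, π]`, an upper bound on `dist x y / min a b` becomes one on `θ`.
-/

section Angle

open EuclideanGeometry

variable {V P : Type*} [NormedAddCommGroup V] [InnerProductSpace ℝ V] [MetricSpace P]
  [NormedAddTorsor V P]

theorem dist_sq_eq_sq_dist_sub_dist_add_sin_half_angle_sq (x p y : P) :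
    dist x y ^ 2 =
      (dist x p - dist y p) ^ 2 + 4 * (dist x p * dist y p) * Real.sin (∠ x p y / 2) ^ 2 := by
  have law_cos := dist_sq_eq_dist_sq_add_dist_sq_sub_two_mul_dist_mul_dist_mul_cos_angle x p y
  have sin_half_sq := Real.sin_sq_eq_half_sub (∠ x p y / 2)
  rw [mul_div_cancel₀ _ two_ne_zero] at sin_half_sq
  rw [sin_half_sq]
  linear_combination law_cos

theorem two_mul_sin_half_angle_mul_min_dist_le_dist (x p y : P) :
    2 * Real.sin (∠ x p y / 2) * min (dist x p) (dist y p) ≤ dist x y := by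
  refine le_of_sq_le_sq ?_ dist_nonneg
  have min_sq_le : min (dist x p) (dist y p) ^ 2 ≤ dist x p * dist y p := by
    rw [sq]
    gcongr
    exacts [min_le_left _ _, min_le_right _ _]
  calc (2 * Real.sin (∠ x p y / 2) * min (dist x p) (dist y p)) ^ 2
      = 4 * min (dist x p) (dist y p) ^ 2 * Real.sin (∠ x p y / 2) ^ 2 := by ring
    _ ≤ 4 * (dist x p * dist y p) * Real.sin (∠ x p y / 2) ^ 2 := by gcongr
    _ ≤ dist x y ^ 2 := by
      rw [dist_sq_eq_sq_dist_sub_dist_add_sin_half_angle_sq x p y]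
      exact le_add_of_nonneg_left (sq_nonneg _)

theorem angle_lt_of_dist_lt_two_mul_sin_half_mul_min_dist {x p y : P} {r : ℝ} (hr : 0 ≤ r)
    (h : dist x y < 2 * Real.sin (r / 2) * min (dist x p) (dist y p)) : ∠ x p y < r := by
  contrapose! h
  have sin_half_le : Real.sin (r / 2) ≤ Real.sin (∠ x p y / 2) :=
    Real.sin_le_sin_of_le_of_le_pi_div_two (by linarith [Real.pi_pos])
      (by linarith [angle_le_pi x p y]) (by linarith)
  calc 2 * Real.sin (r / 2) * min (dist x p) (dist y p)
      ≤ 2 * Real.sin (∠ x p y / 2) * min (dist x p) (dist y p) := by gcongr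
    _ ≤ dist x y := two_mul_sin_half_angle_mul_min_dist_le_dist x p y

theorem stmt_9_general {x p y : P} (hx : x ≠ p) (hy : y ≠ p) {r : ℝ} (hr : 0 ≤ r)
    (hj : Real.log (1 + dist x y / min (dist x p) (dist y p)) <
      Real.log (1 + 2 * Real.sin (r / 2))) :
    ∠ x p y < r := by
  by_contra! r_le
  have min_pos : 0 < min (dist x p) (dist y p) := lt_min (dist_pos.2 hx) (dist_pos.2 hy)
  have sin_half_nonneg : 0 ≤ Real.sin (r / 2) :=
    Real.sin_nonneg_of_nonneg_of_le_pi (by linarith) (by linarith [angle_le_pi x p y])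
  have ratio_lt : dist x y / min (dist x p) (dist y p) < 2 * Real.sin (r / 2) :=
    lt_of_add_lt_add_left ((Real.log_lt_log_iff (by positivity) (by positivity)).1 hj)
  exact r_le.not_gt <|
    angle_lt_of_dist_lt_two_mul_sin_half_mul_min_dist hr ((div_lt_iff₀ min_pos).1 ratio_lt)

end Angle

theorem stmt_9 (n : ℕ) (hn : 2 ≤ n) (x : EuclideanSpace ℝ (Fin n)) (hx : x ≠ 0)
    (r : ℝ) (hr : r ∈ Set.Ioc (0:ℝ) Real.pi)
    (y : EuclideanSpace ℝ (Fin n)) (hy : y ≠ 0)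
    (hj : Real.log (1 + dist x y / min ‖x‖ ‖y‖) < Real.log (1 + 2 * Real.sin (r / 2))) :
    EuclideanGeometry.angle x 0 y < r :=
  stmt_9_general hx hy hr.1.le (by simpa only [dist_zero_right] using hj)
end

section
/- Let n ≥ 2 and x ∈ ℝⁿ \ {0}. (a) If r ∈ (0,π/2] and y ∈ ℝⁿ satisfies |x−y| < |x| sin r, then y ≠ 0 and ∠(x,0,y) < r. (b) If r ∈ (π/2, π] and y ∈ ℝⁿ satisfies |x−y| < |x|, then y ≠ 0 and ∠(x,0,y) < r. That is, the Euclidean ball Bⁿ(x,R) with R = |x| sin r for r ∈ (0,π/2] and R = |x| for r ∈ (π/2,π] is contained in B_v(x,r). -/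
/-!
In the triangle with vertices `0`, `x`, `y`, the law of sines gives `‖x‖ * sin ∠ x 0 y ≤ dist x y`.
The sine determines the angle only on `[0, π / 2]`, but by the law of cosines the angle at `0` is
acute as soon as `dist x y < ‖x‖`.
-/

section Triangle

open EuclideanGeometry Real

variable {V P : Type*} [NormedAddCommGroup V] [InnerProductSpace ℝ V] [MetricSpace P]
  [NormedAddTorsor V P]

theorem dist_mul_sin_angle_le_dist (a b c : P) : dist a b * sin (∠ a b c) ≤ dist a c :=
  calc
    dist a b * sin (∠ a b c) = sin (∠ a c b) * dist a c := by
      rw [mul_comm, dist_comm, angle_comm a b c, law_sin, angle_comm]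
    _ ≤ dist a c := mul_le_of_le_one_left dist_nonneg (sin_le_one _)

theorem dist_le_dist_of_pi_div_two_le_angle {a b c : P} (h : π / 2 ≤ ∠ a b c) :
    dist a b ≤ dist a c := by
  have cos_nonpos : cos (∠ a b c) ≤ 0 :=
    cos_nonpos_of_pi_div_two_le_of_le h ((angle_le_pi a b c).trans (by linarith [pi_pos]))
  have cross_term_nonpos : dist a b * dist c b * cos (∠ a b c) ≤ 0 :=
    mul_nonpos_of_nonneg_of_nonpos (by positivity) cos_nonpos
  refine le_of_sq_le_sq ?_ dist_nonneg
  linarith [law_cos a b c, mul_self_nonneg (dist c b)]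

theorem angle_lt_pi_div_two_of_dist_lt_dist {a b c : P} (h : dist a c < dist a b) :
    ∠ a b c < π / 2 :=
  lt_of_not_ge fun h_angle => h.not_ge (dist_le_dist_of_pi_div_two_le_angle h_angle)

theorem dist_lt_dist_of_dist_lt_dist_mul_sin {a b c : P} {r : ℝ}
    (h : dist a c < dist a b * sin r) : dist a c < dist a b :=
  h.trans_le (mul_le_of_le_one_right dist_nonneg (sin_le_one r))

theorem angle_lt_of_dist_lt_dist_mul_sin {a b c : P} {r : ℝ} (hr : 0 ≤ r)
    (h : dist a c < dist a b * sin r) : ∠ a b c < r := by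
  have angle_acute : ∠ a b c < π / 2 :=
    angle_lt_pi_div_two_of_dist_lt_dist (dist_lt_dist_of_dist_lt_dist_mul_sin h)
  by_contra! r_le_angle
  have sin_le_sin : sin r ≤ sin (∠ a b c) :=
    sin_le_sin_of_le_of_le_pi_div_two (by linarith [pi_pos]) angle_acute.le r_le_angle
  refine h.not_ge ?_
  calc
    dist a b * sin r ≤ dist a b * sin (∠ a b c) := by gcongr
    _ ≤ dist a c := dist_mul_sin_angle_le_dist a b c

theorem ne_of_dist_lt_dist {a b c : P} (h : dist a c < dist a b) : c ≠ b :=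
  ne_of_apply_ne (dist a) h.ne

theorem stmt_12_general (x p : P) :
    (∀ r, 0 ≤ r → ∀ y, dist x y < dist x p * sin r → y ≠ p ∧ ∠ x p y < r) ∧
    (∀ r, π / 2 ≤ r → ∀ y, dist x y < dist x p → y ≠ p ∧ ∠ x p y < r) :=
  ⟨fun _ hr _ hy => ⟨ne_of_dist_lt_dist (dist_lt_dist_of_dist_lt_dist_mul_sin hy),
      angle_lt_of_dist_lt_dist_mul_sin hr hy⟩,
    fun _ hr _ hy => ⟨ne_of_dist_lt_dist hy,
      (angle_lt_pi_div_two_of_dist_lt_dist hy).trans_le hr⟩⟩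

end Triangle

theorem stmt_12 (n : ℕ) (hn : 2 ≤ n) (x : EuclideanSpace ℝ (Fin n)) (hx : x ≠ 0) :
    (∀ r ∈ Set.Ioc (0:ℝ) (Real.pi / 2), ∀ y : EuclideanSpace ℝ (Fin n),
      dist x y < ‖x‖ * Real.sin r → y ≠ 0 ∧ EuclideanGeometry.angle x 0 y < r) ∧
    (∀ r ∈ Set.Ioc (Real.pi / 2) Real.pi, ∀ y : EuclideanSpace ℝ (Fin n),
      dist x y < ‖x‖ → y ≠ 0 ∧ EuclideanGeometry.angle x 0 y < r) := by
  rw [← dist_zero_right x]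
  exact (stmt_12_general x 0).imp (fun h r hr => h r hr.1.le) (fun h r hr => h r hr.1.le)
end

section
/- Let n ≥ 2, x ∈ ℝⁿ \ {0} and r ∈ (0,π]. If y ∈ ℝⁿ \ {0} satisfies p(x,y) = |x−y| / √(|x−y|² + 4|x||y|) < sin(r/2)/√(sin²(r/2) + 1), then ∠(x,0,y) < r. That is, B_p(x, sin(r/2)/√(sin²(r/2)+1)) ⊂ B_v(x,r) in ℝⁿ \ {0}. -/
/-! With `θ = ∠ x c y`, the law of cosines in half-angle form is
`|x - y|² = (|x - c| - |y - c|)² + 4 |x - c| |y - c| sin²(θ / 2)`, so the normalized distance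
`q = |x - y| / √(4 |x - c| |y - c|)` is at least `sin (θ / 2)`. The point pair function is
`q / √(q² + 1)`, and `t ↦ t / √(t² + 1)` is strictly increasing; hence the hypothesis gives
`sin (θ / 2) ≤ q < sin (r / 2)`. -/

open EuclideanGeometry Real

theorem strictMono_div_sqrt_sq_add_one : StrictMono fun t : ℝ ↦ t / √(t ^ 2 + 1) := by
  intro a b hab
  simp only [add_comm _ (1 : ℝ), ← sin_arctan]
  exact sin_lt_sin_of_lt_of_le_pi_div_two (neg_pi_div_two_lt_arctan a).le
    (arctan_lt_pi_div_two b).le (arctan_strictMono hab)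

theorem div_sqrt_sq_add_eq_div_sqrt_sq_add_one {m : ℝ} (hm : 0 < m) (d : ℝ) :
    d / √(d ^ 2 + m) = d / √m / √((d / √m) ^ 2 + 1) := by
  rw [div_div, ← sqrt_mul hm.le, div_pow, sq_sqrt hm.le, mul_add_one, mul_div_cancel₀ _ hm.ne']

section

variable {V P : Type*} [NormedAddCommGroup V] [InnerProductSpace ℝ V] [MetricSpace P]
  [NormedAddTorsor V P]

theorem dist_sq_eq_sq_sub_add_mul_sin_sq_half_angle (x c y : P) :
    dist x y ^ 2 =
      (dist x c - dist y c) ^ 2 + 4 * dist x c * dist y c * sin (∠ x c y / 2) ^ 2 := by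
  rw [sin_sq_eq_half_sub, mul_div_cancel₀ _ two_ne_zero]
  linear_combination law_cos x c y

theorem sin_half_angle_le_dist_div_sqrt {x c y : P} (hx : x ≠ c) (hy : y ≠ c) :
    sin (∠ x c y / 2) ≤ dist x y / √(4 * dist x c * dist y c) := by
  have hm : 0 < 4 * dist x c * dist y c :=
    mul_pos (mul_pos four_pos (dist_pos.mpr hx)) (dist_pos.mpr hy)
  refine le_of_sq_le_sq ?_ (by positivity)
  rw [div_pow, sq_sqrt hm.le, le_div_iff₀' hm,
    dist_sq_eq_sq_sub_add_mul_sin_sq_half_angle x c y]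
  exact le_add_of_nonneg_left (sq_nonneg _)

theorem stmt_14_general {x c y : P} (hx : x ≠ c) (hy : y ≠ c) {r : ℝ} (hr : -π ≤ r)
    (hp : dist x y / √(dist x y ^ 2 + 4 * dist x c * dist y c) <
      sin (r / 2) / √(sin (r / 2) ^ 2 + 1)) :
    ∠ x c y < r := by
  have hm : 0 < 4 * dist x c * dist y c :=
    mul_pos (mul_pos four_pos (dist_pos.mpr hx)) (dist_pos.mpr hy)
  rw [div_sqrt_sq_add_eq_div_sqrt_sq_add_one hm] at hp
  have sin_half_lt : sin (∠ x c y / 2) < sin (r / 2) :=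
    (sin_half_angle_le_dist_div_sqrt hx hy).trans_lt
      (strictMono_div_sqrt_sq_add_one.lt_iff_lt.mp hp)
  by_contra! r_le
  refine sin_half_lt.not_ge (sin_le_sin_of_le_of_le_pi_div_two ?_ ?_ ?_)
  · linarith
  · linarith [angle_le_pi x c y]
  · linarith

end

theorem stmt_14 (n : ℕ) (hn : 2 ≤ n) (x : EuclideanSpace ℝ (Fin n)) (hx : x ≠ 0)
    (r : ℝ) (hr : r ∈ Set.Ioc (0:ℝ) Real.pi)
    (y : EuclideanSpace ℝ (Fin n)) (hy : y ≠ 0)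
    (hp : dist x y / Real.sqrt (dist x y ^ 2 + 4 * ‖x‖ * ‖y‖) <
      Real.sin (r / 2) / Real.sqrt (Real.sin (r / 2) ^ 2 + 1)) :
    EuclideanGeometry.angle x 0 y < r := by
  simp only [← dist_zero_right] at hp
  exact stmt_14_general hx hy (by linarith [hr.1, pi_pos]) hp
end

section
/- Let n ≥ 2, let x ∈ Hⁿ = {w ∈ ℝⁿ : wₙ > 0}, let r ∈ (0,π/2), and let y ∈ Hⁿ satisfy v(x,y) = sup{∠(x,z,y) : z ∈ ℝⁿ, zₙ = 0} < r. Then |y − x − 2xₙ tan²(r)·eₙ| < 2xₙ tan(r)/cos(r), and consequently |y − x| < 2xₙ (tan(r)/cos(r) + tan²(r)). That is, B_v(x,r) ⊂ Bⁿ(x + 2xₙ tan²(r) eₙ, 2xₙ tan(r)/cos(r)) ⊂ Bⁿ(x, 2xₙ(tan(r)/cos(r) + tan²(r))). -/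
/-- The visual angle metric on the upper half space `{w : wᵢ > 0}` (with `i` the index of
the last coordinate): `v(x,y) = sup {∠(x,z,y) : z ∈ ∂Hⁿ} = sup {∠(x,z,y) : zᵢ = 0}`. -/
noncomputable def visualAngleH {n : ℕ} (i : Fin n) (x y : EuclideanSpace ℝ (Fin n)) : ℝ :=
  sSup {θ : ℝ | ∃ z : EuclideanSpace ℝ (Fin n), z i = 0 ∧ θ = EuclideanGeometry.angle x z y}

/-!
The key estimate is `arctan (|x - y| / (2√(xₙ yₙ))) ≤ v(x, y)`. It is witnessed by the point `z`
at which the smaller of the two circles through `x` and `y` tangent to `∂Hⁿ`, in a plane orthogonal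
to `∂Hⁿ`, touches `∂Hⁿ`: there the vectors `x - z` and `y - z` span a parallelogram of area
`√(xₙ yₙ) |x - y|`, while their inner product is at most `2 xₙ yₙ`. Hence `v(x, y) < r` forces
`|x - y|² < 4 xₙ yₙ tan² r`, and completing the square in the direction `eₙ` turns this inequality
into membership of `y` in the Euclidean ball with centre `x + 2 xₙ tan² r • eₙ`.
-/

open Real InnerProductGeometry
open scoped EuclideanGeometry RealInnerProductSpace

lemma arctan_le_of_mul_cos_le_sin {t θ : ℝ} (hθ : 0 ≤ θ) (h : t * cos θ ≤ sin θ) :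
    arctan t ≤ θ := by
  rcases lt_or_ge θ (π / 2) with hlt | hge
  · have hneg : -(π / 2) < θ := by linarith [pi_pos]
    rw [← arctan_tan hneg hlt, tan_eq_sin_div_cos]
    exact arctan_mono ((le_div_iff₀ (cos_pos_of_mem_Ioo ⟨hneg, hlt⟩)).2 h)
  · exact (arctan_lt_pi_div_two t).le.trans hge

-- The touching point of the smaller tangent circle, for points `(0, a)` and `(d, b)` at distance
-- `D`; for `a ≠ b` it is found from the power of the point where their line meets the axis.
lemma exists_tangency_abscissa {a b d q D : ℝ} (ha : 0 < a) (hb : 0 < b) (hd : 0 ≤ d)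
    (hq : 0 ≤ q) (hqq : q ^ 2 = a * b) (hD : 0 ≤ D) (hDD : D ^ 2 = d ^ 2 + (b - a) ^ 2) :
    ∃ s : ℝ, a * d - s * (a - b) = q * D ∧ s * (s - d) ≤ a * b := by
  rcases eq_or_ne a b with rfl | hab
  · have hqa : q = a := (sq_eq_sq₀ hq ha.le).1 (by linarith)
    have hDd : D = d := (sq_eq_sq₀ hD hd).1 (by linarith)
    exact ⟨d / 2, by rw [hqa, hDd]; ring, by nlinarith [sq_nonneg d]⟩
  · have hab' : a - b ≠ 0 := sub_ne_zero.2 hab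
    have two_mul_q_le : 2 * q ≤ a + b :=
      (sq_le_sq₀ (by positivity) (by positivity)).1 (by linarith [sq_nonneg (a - b)])
    have d_le_D : d ≤ D := (sq_le_sq₀ hd hD).1 (by linarith [sq_nonneg (b - a)])
    have amgm : q * d * (2 * q * d) ≤ q * d * ((a + b) * D) := by gcongr
    refine ⟨(a * d - q * D) / (a - b), by field_simp; ring, ?_⟩
    have hprod : (a * d - q * D) / (a - b) * ((a * d - q * D) / (a - b) - d)
        = (a * d - q * D) * (b * d - q * D) / (a - b) ^ 2 := by field_simp; ring
    rw [hprod, div_le_iff₀ (by positivity)]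
    linear_combination amgm + (D ^ 2 - 2 * d ^ 2) * hqq + a * b * hDD

section InnerProductSpace

variable {V : Type*} [NormedAddCommGroup V] [InnerProductSpace ℝ V]

lemma arctan_le_angle_of_mul_inner_le_sqrt {u w : V} {t : ℝ}
    (h : t * ⟪u, w⟫ ≤ √(⟪u, u⟫ * ⟪w, w⟫ - ⟪u, w⟫ * ⟪u, w⟫)) : arctan t ≤ angle u w := by
  rcases eq_or_ne u 0 with rfl | hu
  · simpa only [angle_zero_left] using (arctan_lt_pi_div_two t).le
  rcases eq_or_ne w 0 with rfl | hw
  · simpa only [angle_zero_right] using (arctan_lt_pi_div_two t).le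
  refine arctan_le_of_mul_cos_le_sin (angle_nonneg u w) ?_
  rw [← sin_angle_mul_norm_mul_norm, ← cos_angle_mul_norm_mul_norm, ← mul_assoc] at h
  exact le_of_mul_le_mul_right h (by positivity)

lemma inner_smul_add_smul_of_unit_orthogonal {e f : V} (he : ‖e‖ = 1) (hf : ‖f‖ = 1)
    (hfe : ⟪f, e⟫ = 0) (α β γ δ : ℝ) :
    ⟪α • e + β • f, γ • e + δ • f⟫ = α * γ + β * δ := by
  have hef : ⟪e, f⟫ = 0 := inner_eq_zero_symm.1 hfe
  simp only [inner_add_left, inner_add_right, real_inner_smul_left, real_inner_smul_right,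
    real_inner_self_eq_norm_sq, he, hf, hfe, hef]
  ring

lemma arctan_le_angle_smul_add_smul {e f : V} (he : ‖e‖ = 1) (hf : ‖f‖ = 1)
    (hfe : ⟪f, e⟫ = 0) {α β γ δ t : ℝ} (h : t * (α * γ + β * δ) ≤ |α * δ - β * γ|) :
    arctan t ≤ angle (α • e + β • f) (γ • e + δ • f) := by
  apply arctan_le_angle_of_mul_inner_le_sqrt
  simp only [inner_smul_add_smul_of_unit_orthogonal he hf hfe]
  rwa [show (α * α + β * β) * (γ * γ + δ * δ) - (α * γ + β * δ) * (α * γ + β * δ)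
    = (α * δ - β * γ) ^ 2 by ring, sqrt_sq_eq_abs]

lemma exists_unit_smul_eq [Nontrivial V] (v : V) : ∃ e : V, ‖e‖ = 1 ∧ ‖v‖ • e = v := by
  rcases eq_or_ne v 0 with rfl | hv
  · obtain ⟨e, he⟩ := exists_norm_eq V zero_le_one
    exact ⟨e, he, by simp⟩
  · exact ⟨NormedSpace.normalize v, NormedSpace.norm_normalize hv,
      NormedSpace.norm_smul_normalize v⟩

lemma exists_unit_orthogonal_decomposition {f : V} (hf : ‖f‖ = 1) [Nontrivial (ℝ ∙ f)ᗮ] (p : V) :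
    ∃ (e : V) (d : ℝ), ‖e‖ = 1 ∧ ⟪f, e⟫ = 0 ∧ 0 ≤ d ∧ p = d • e + ⟪f, p⟫ • f := by
  have hp : p - ⟪f, p⟫ • f ∈ (ℝ ∙ f)ᗮ := by
    rw [Submodule.mem_orthogonal_singleton_iff_inner_right, inner_sub_right,
      real_inner_smul_right, real_inner_self_eq_norm_sq, hf]
    ring
  obtain ⟨e, he, hpe⟩ := exists_unit_smul_eq (⟨_, hp⟩ : (ℝ ∙ f)ᗮ)
  refine ⟨e, _, he, Submodule.mem_orthogonal_singleton_iff_inner_right.1 e.2, norm_nonneg _,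
    eq_add_of_sub_eq (congrArg Subtype.val hpe).symm⟩

lemma exists_arctan_dist_div_le_angle {f : V} (hf : ‖f‖ = 1) [Nontrivial (ℝ ∙ f)ᗮ] {x y : V}
    (hx : 0 < ⟪f, x⟫) (hy : 0 < ⟪f, y⟫) :
    ∃ z : V, ⟪f, z⟫ = 0 ∧ arctan (dist x y / (2 * √(⟪f, x⟫ * ⟪f, y⟫))) ≤ ∠ x z y := by
  obtain ⟨e, d, he, hfe, hd, hyx⟩ := exists_unit_orthogonal_decomposition hf (y - x)
  rw [inner_sub_right] at hyx
  set a := ⟪f, x⟫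
  set b := ⟪f, y⟫
  set q := √(a * b)
  have hq : 0 < q := sqrt_pos.2 (mul_pos hx hy)
  have hqq : q ^ 2 = a * b := sq_sqrt (mul_pos hx hy).le
  have hdist : dist x y ^ 2 = d ^ 2 + (b - a) ^ 2 := by
    rw [dist_eq_norm', ← real_inner_self_eq_norm_sq, hyx,
      inner_smul_add_smul_of_unit_orthogonal he hf hfe]
    ring
  obtain ⟨s, area_eq, hs⟩ := exists_tangency_abscissa hx hy hd hq.le hqq dist_nonneg hdist
  refine ⟨x + s • e - a • f, ?_, ?_⟩
  · rw [inner_sub_right, inner_add_right, real_inner_smul_right, real_inner_smul_right, hfe,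
      real_inner_self_eq_norm_sq, hf]
    ring
  have hxz : x - (x + s • e - a • f) = (-s) • e + a • f := by module
  have hyz : y - (x + s • e - a • f) = (d - s) • e + b • f := by
    rw [← sub_add_cancel y x, hyx]
    module
  rw [EuclideanGeometry.angle, vsub_eq_sub, vsub_eq_sub, hxz, hyz]
  apply arctan_le_angle_smul_add_smul he hf hfe
  have hinner : -s * (d - s) + a * b ≤ 2 * q ^ 2 := by linarith
  calc dist x y / (2 * q) * (-s * (d - s) + a * b)
      ≤ dist x y / (2 * q) * (2 * q ^ 2) := by gcongr
    _ = a * d - s * (a - b) := by rw [area_eq]; field_simp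
    _ = -(-s * b - a * (d - s)) := by ring
    _ ≤ |-s * b - a * (d - s)| := neg_le_abs _

-- For `c = sinh² (ρ / 2)` both sides describe the hyperbolic ball about `x` of radius `ρ` in the
-- half space `{w | 0 < ⟪f, w⟫}`.
lemma dist_sq_lt_iff_dist_add_smul_sq_lt {f : V} (hf : ‖f‖ = 1) (x y : V) (c : ℝ) :
    dist y x ^ 2 < 4 * ⟪f, x⟫ * ⟪f, y⟫ * c ↔
      dist y (x + (2 * ⟪f, x⟫ * c) • f) ^ 2 < 4 * ⟪f, x⟫ ^ 2 * c * (1 + c) := by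
  have expand : dist y (x + (2 * ⟪f, x⟫ * c) • f) ^ 2 =
      dist y x ^ 2 - 4 * ⟪f, x⟫ * c * (⟪f, y⟫ - ⟪f, x⟫) + 4 * ⟪f, x⟫ ^ 2 * c ^ 2 := by
    rw [dist_eq_norm, dist_eq_norm, ← sub_sub, norm_sub_sq_real, real_inner_smul_right,
      real_inner_comm f (y - x), inner_sub_right, norm_smul, hf, mul_one, norm_eq_abs, sq_abs]
    ring
  rw [expand, ← sub_pos, ← sub_pos (b := _ - _ + _)]
  ring_nf

end InnerProductSpace

section VisualAngle

variable {n : ℕ} {i : Fin n} {x y : EuclideanSpace ℝ (Fin n)}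

lemma angle_le_visualAngleH {z : EuclideanSpace ℝ (Fin n)} (hz : z i = 0) :
    ∠ x z y ≤ visualAngleH i x y := by
  refine le_csSup ⟨π, ?_⟩ ⟨z, hz, rfl⟩
  rintro _ ⟨w, -, rfl⟩
  exact EuclideanGeometry.angle_le_pi x w y

lemma inner_single_one_left (x : EuclideanSpace ℝ (Fin n)) :
    ⟪EuclideanSpace.single i (1 : ℝ), x⟫ = x i := by
  simp [EuclideanSpace.inner_single_left]

lemma nontrivial_orthogonal_span_single [Nontrivial (Fin n)] (i : Fin n) :
    Nontrivial (ℝ ∙ EuclideanSpace.single i (1 : ℝ))ᗮ := by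
  obtain ⟨j, hj⟩ := exists_ne i
  refine Submodule.nontrivial_iff_ne_bot.2 ((Submodule.ne_bot_iff _).2
    ⟨EuclideanSpace.single j 1, ?_, by simp⟩)
  rw [Submodule.mem_orthogonal_singleton_iff_inner_right, inner_single_one_left]
  simp [hj.symm]

theorem arctan_dist_div_le_visualAngleH [Nontrivial (Fin n)] (hx : 0 < x i) (hy : 0 < y i) :
    arctan (dist x y / (2 * √(x i * y i))) ≤ visualAngleH i x y := by
  have := nontrivial_orthogonal_span_single i
  rw [← inner_single_one_left (i := i)] at hx hy
  obtain ⟨z, hz, hangle⟩ := exists_arctan_dist_div_le_angle (by simp) hx hy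
  simp only [inner_single_one_left] at hz hangle
  exact hangle.trans (angle_le_visualAngleH hz)

theorem dist_sq_lt_of_visualAngleH_lt [Nontrivial (Fin n)] (hx : 0 < x i) (hy : 0 < y i) {r : ℝ}
    (hr : r < π / 2) (hv : visualAngleH i x y < r) :
    dist y x ^ 2 < 4 * x i * y i * tan r ^ 2 := by
  have hxy : 0 < x i * y i := mul_pos hx hy
  have htan : dist x y / (2 * √(x i * y i)) < tan r := by
    rw [← tan_arctan (dist x y / _)]
    exact tan_lt_tan_of_lt_of_lt_pi_div_two (neg_pi_div_two_lt_arctan _) hr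
      ((arctan_dist_div_le_visualAngleH hx hy).trans_lt hv)
  rw [div_lt_iff₀ (by positivity)] at htan
  calc dist y x ^ 2 = dist x y ^ 2 := by rw [dist_comm]
    _ < (tan r * (2 * √(x i * y i))) ^ 2 := by gcongr
    _ = 4 * x i * y i * tan r ^ 2 := by rw [mul_pow, mul_pow, sq_sqrt hxy.le]; ring

theorem dist_add_smul_single_lt_of_visualAngleH_lt [Nontrivial (Fin n)] (hx : 0 < x i)
    (hy : 0 < y i) {r : ℝ} (hr : r ∈ Set.Ioo 0 (π / 2)) (hv : visualAngleH i x y < r) :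
    dist y (x + (2 * x i * tan r ^ 2) • EuclideanSpace.single i (1 : ℝ)) <
      2 * x i * tan r / cos r := by
  have hcos : 0 < cos r := cos_pos_of_mem_Ioo ⟨by linarith [hr.1, pi_pos], hr.2⟩
  have htan : 0 < tan r := tan_pos_of_pos_of_lt_pi_div_two hr.1 hr.2
  have radius_sq : 4 * x i ^ 2 * tan r ^ 2 * (1 + tan r ^ 2) = (2 * x i * tan r / cos r) ^ 2 := by
    rw [← inv_inv (1 + tan r ^ 2), inv_one_add_tan_sq hcos.ne']
    ring
  have hball := (dist_sq_lt_iff_dist_add_smul_sq_lt (f := EuclideanSpace.single i (1 : ℝ))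
    (by simp) x y (tan r ^ 2)).1
  simp only [inner_single_one_left, radius_sq] at hball
  exact lt_of_pow_lt_pow_left₀ 2 (by positivity)
    (hball (dist_sq_lt_of_visualAngleH_lt hx hy hr.2 hv))

end VisualAngle

theorem stmt_16 (n : ℕ) (hn : 2 ≤ n) (x : EuclideanSpace ℝ (Fin n))
    (hx : x ⟨n - 1, by omega⟩ > 0) (r : ℝ) (hr : r ∈ Set.Ioo (0:ℝ) (Real.pi / 2))
    (y : EuclideanSpace ℝ (Fin n)) (hy : y ⟨n - 1, by omega⟩ > 0)
    (hv : visualAngleH ⟨n - 1, by omega⟩ x y < r) :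
    dist y (x + (2 * x ⟨n - 1, by omega⟩ * Real.tan r ^ 2) •
        EuclideanSpace.single (⟨n - 1, by omega⟩ : Fin n) (1:ℝ)) <
      2 * x ⟨n - 1, by omega⟩ * Real.tan r / Real.cos r ∧
    dist y x < 2 * x ⟨n - 1, by omega⟩ * (Real.tan r / Real.cos r + Real.tan r ^ 2) := by
  have : Nontrivial (Fin n) := Fin.nontrivial_iff_two_le.2 hn
  have hball := dist_add_smul_single_lt_of_visualAngleH_lt hx hy hr hv
  refine ⟨hball, ?_⟩
  set a := x ⟨n - 1, by omega⟩
  set c := x + (2 * a * tan r ^ 2) • EuclideanSpace.single (⟨n - 1, by omega⟩ : Fin n) (1 : ℝ)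
  have dist_center : dist c x = 2 * a * tan r ^ 2 := by
    rw [dist_self_add_left, norm_smul, PiLp.norm_single, norm_one, mul_one,
      norm_of_nonneg (by positivity)]
  calc dist y x ≤ dist y c + dist c x := dist_triangle y c x
    _ < 2 * a * tan r / cos r + 2 * a * tan r ^ 2 := by rw [dist_center]; gcongr
    _ = 2 * a * (tan r / cos r + tan r ^ 2) := by ring
end

section
/- Let x ∈ H² = {w ∈ ℝ² : w₂ > 0} and r ∈ (0,π/2). Define y₁ = (x₁, x₂·(1−sin r)/(1+sin r)) and y₂ = (x₁, x₂·(1+sin r)/(1−sin r)). Then v(x,y₁) = v(x,y₂) = r, where v(x,y) = sup{∠(x,z,y) : z ∈ ℝ², z₂ = 0}, and both points lie on the boundary of the Euclidean ball B²(x + 2x₂ tan²(r) e₂, 2x₂ tan(r)/cos(r)): |yⱼ − x − 2x₂ tan²(r) e₂| = 2x₂ tan(r)/cos(r) for j = 1, 2. Hence the Euclidean ball B²(x + 2x₂ tan²(r) e₂, 2x₂ tan(r)/cos(r)) containing B_v(x,r) is smallest possible. -/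
/-!
A boundary point `z` at horizontal distance `t` from the vertical line through points of heights
`a` and `b` sees them at an acute angle whose sine is
`t |a - b| / √((t² + a²) (t² + b²)) = t |a - b| / √((t² - a b)² + (t (a + b))²)`.
Hence the angle is at most `arcsin (|a - b| / (a + b))`, with equality when `t² = a b`.
For heights in the ratio `(1 + sin r) / (1 - sin r)` the maximum is `|r|`; since this ratio equals
`1 + 2 tan² r + 2 tan r / cos r`, such points lie on the asserted sphere, `y₁` being the case `-r`.
-/

lemma sin_lt_one_of_cos_ne_zero {r : ℝ} (hr : Real.cos r ≠ 0) : Real.sin r < 1 := by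
  refine (Real.sin_le_one r).lt_of_ne fun sin_eq_one => hr ?_
  simpa [sin_eq_one] using Real.sin_sq_add_cos_sq r

lemma one_add_sin_div_one_sub_sin {r : ℝ} (hr : Real.cos r ≠ 0) :
    (1 + Real.sin r) / (1 - Real.sin r) =
      1 + 2 * Real.tan r ^ 2 + 2 * Real.tan r / Real.cos r := by
  have one_sub_ne : 1 - Real.sin r ≠ 0 := (sub_pos.mpr (sin_lt_one_of_cos_ne_zero hr)).ne'
  rw [Real.tan_eq_sin_div_cos]
  field_simp
  linear_combination (2 * Real.sin r) * Real.sin_sq_add_cos_sq r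

section PerpendicularOffset

open InnerProductGeometry
open scoped RealInnerProductSpace

variable {V : Type*} [NormedAddCommGroup V] [InnerProductSpace ℝ V] {u e : V} {a b : ℝ}

lemma inner_add_smul_add_smul_of_inner_eq_zero (hue : ⟪u, e⟫ = 0) (he : ‖e‖ = 1) (a b : ℝ) :
    ⟪u + a • e, u + b • e⟫ = ‖u‖ ^ 2 + a * b := by
  have heu : ⟪e, u⟫ = 0 := by rw [real_inner_comm, hue]
  simp only [inner_add_left, inner_add_right, real_inner_smul_left, real_inner_smul_right,
    real_inner_self_eq_norm_sq, hue, heu, he]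
  ring

lemma angle_add_smul_add_smul_of_inner_eq_zero (hue : ⟪u, e⟫ = 0) (he : ‖e‖ = 1)
    (ha : 0 < a) (hb : 0 < b) :
    angle (u + a • e) (u + b • e) =
      Real.arcsin (‖u‖ * |a - b| / √((‖u‖ ^ 2 - a * b) ^ 2 + (‖u‖ * (a + b)) ^ 2)) := by
  have inner_eq := inner_add_smul_add_smul_of_inner_eq_zero hue he
  have norm_sq_eq (c : ℝ) : ‖u + c • e‖ ^ 2 = ‖u‖ ^ 2 + c * c := by
    rw [← real_inner_self_eq_norm_sq, inner_eq]
  have acute : angle (u + a • e) (u + b • e) ≤ Real.pi / 2 := by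
    rw [angle, Real.arccos_le_pi_div_two, inner_eq]
    positivity
  have norm_mul_norm : ‖u + a • e‖ * ‖u + b • e‖ =
      √((‖u‖ ^ 2 - a * b) ^ 2 + (‖u‖ * (a + b)) ^ 2) := by
    rw [← Real.sqrt_sq (by positivity : 0 ≤ ‖u + a • e‖ * ‖u + b • e‖), mul_pow, norm_sq_eq,
      norm_sq_eq]
    congr 1
    ring
  have sin_mul : Real.sin (angle (u + a • e) (u + b • e)) * (‖u + a • e‖ * ‖u + b • e‖) =
      ‖u‖ * |a - b| := by
    rw [sin_angle_mul_norm_mul_norm, inner_eq, inner_eq, inner_eq,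
      ← Real.sqrt_sq (by positivity : 0 ≤ ‖u‖ * |a - b|), mul_pow, sq_abs]
    congr 1
    ring
  have norm_mul_norm_pos : 0 < ‖u + a • e‖ * ‖u + b • e‖ := by
    have norm_pos {c : ℝ} (hc : 0 < c) : 0 < ‖u + c • e‖ :=
      (norm_nonneg _).lt_of_ne' <| by
        rw [← pow_ne_zero_iff two_ne_zero, norm_sq_eq]
        positivity
    exact mul_pos (norm_pos ha) (norm_pos hb)
  rw [← norm_mul_norm, ← (eq_div_iff norm_mul_norm_pos.ne').mpr sin_mul,
    Real.arcsin_sin (by linarith [angle_nonneg (u + a • e) (u + b • e), Real.pi_pos]) acute]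

lemma angle_add_smul_add_smul_le (hue : ⟪u, e⟫ = 0) (he : ‖e‖ = 1) (ha : 0 < a) (hb : 0 < b) :
    angle (u + a • e) (u + b • e) ≤ Real.arcsin (|a - b| / (a + b)) := by
  rw [angle_add_smul_add_smul_of_inner_eq_zero hue he ha hb]
  apply Real.arcsin_le_arcsin
  have le_sqrt : ‖u‖ * (a + b) ≤ √((‖u‖ ^ 2 - a * b) ^ 2 + (‖u‖ * (a + b)) ^ 2) :=
    Real.le_sqrt_of_sq_le (le_add_of_nonneg_left (sq_nonneg _))
  refine div_le_of_le_mul₀ (Real.sqrt_nonneg _) (by positivity) ?_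
  calc ‖u‖ * |a - b| = |a - b| / (a + b) * (‖u‖ * (a + b)) := by field_simp
    _ ≤ |a - b| / (a + b) * √((‖u‖ ^ 2 - a * b) ^ 2 + (‖u‖ * (a + b)) ^ 2) := by gcongr

lemma angle_add_smul_add_smul_of_norm_sq_eq (hue : ⟪u, e⟫ = 0) (he : ‖e‖ = 1)
    (ha : 0 < a) (hb : 0 < b) (hu : ‖u‖ ^ 2 = a * b) :
    angle (u + a • e) (u + b • e) = Real.arcsin (|a - b| / (a + b)) := by
  have u_ne : ‖u‖ ≠ 0 := by
    rw [← pow_ne_zero_iff two_ne_zero, hu]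
    positivity
  rw [angle_add_smul_add_smul_of_inner_eq_zero hue he ha hb, hu, sub_self, zero_pow two_ne_zero,
    zero_add, Real.sqrt_sq (by positivity), mul_div_mul_left _ _ u_ne]

end PerpendicularOffset

section VerticalPoints

variable {ι : Type*} [Fintype ι] {i : ι} {x y : EuclideanSpace ℝ ι}

lemma isGreatest_angle_of_vertical [Nontrivial ι] (hx : 0 < x i) (hy : 0 < y i)
    (hxy : ∀ j ≠ i, y j = x j) :
    IsGreatest {θ : ℝ | ∃ z : EuclideanSpace ℝ ι, z i = 0 ∧ θ = EuclideanGeometry.angle x z y}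
      (Real.arcsin (|x i - y i| / (x i + y i))) := by
  classical
  set e : EuclideanSpace ℝ ι := EuclideanSpace.single i 1
  set foot := x - x i • e
  have e_norm : ‖e‖ = 1 := by simp [e]
  have angle_eq (z : EuclideanSpace ℝ ι) : EuclideanGeometry.angle x z y =
      InnerProductGeometry.angle (foot - z + x i • e) (foot - z + y i • e) := by
    have y_eq : y = foot + y i • e := by
      ext j
      by_cases hj : j = i
      · subst hj
        simp [foot, e]
      · simp [foot, e, hj, hxy j hj]
    have x_sub : x - z = foot - z + x i • e := by simp only [foot]; abel
    have y_sub : y - z = foot - z + y i • e := by nth_rw 1 [y_eq]; abel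
    rw [EuclideanGeometry.angle, vsub_eq_sub, vsub_eq_sub, x_sub, y_sub]
  constructor
  · obtain ⟨k, hki⟩ := exists_ne i
    have offset_norm : ‖EuclideanSpace.single k √(x i * y i)‖ ^ 2 = x i * y i := by
      simp [Real.sq_sqrt (mul_pos hx hy).le]
    have offset_inner : inner ℝ (EuclideanSpace.single k √(x i * y i)) e = 0 := by
      simp [e, EuclideanSpace.inner_single_right, hki.symm]
    refine ⟨foot - EuclideanSpace.single k √(x i * y i), by simp [foot, e, hki.symm], ?_⟩
    rw [angle_eq, sub_sub_cancel,
      angle_add_smul_add_smul_of_norm_sq_eq offset_inner e_norm hx hy offset_norm]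
  · rintro _ ⟨z, hz, rfl⟩
    rw [angle_eq]
    have offset_inner : inner ℝ (foot - z) e = 0 := by
      simp [foot, e, EuclideanSpace.inner_single_right, hz]
    exact angle_add_smul_add_smul_le offset_inner e_norm hx hy

lemma dist_add_smul_single_of_height_ratio [DecidableEq ι] {r : ℝ} (hr : 0 < Real.cos r)
    (hx : 0 ≤ x i) (hxy : ∀ j ≠ i, y j = x j)
    (hy : y i = x i * (1 + Real.sin r) / (1 - Real.sin r)) :
    dist y (x + (2 * x i * Real.tan r ^ 2) • EuclideanSpace.single i (1 : ℝ)) =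
      2 * x i * |Real.tan r| / Real.cos r := by
  have sub_eq : y - (x + (2 * x i * Real.tan r ^ 2) • EuclideanSpace.single i (1 : ℝ)) =
      EuclideanSpace.single i (2 * x i * Real.tan r / Real.cos r) := by
    ext j
    by_cases hj : j = i
    · subst hj
      rw [mul_div_assoc, one_add_sin_div_one_sub_sin hr.ne'] at hy
      simp only [PiLp.sub_apply, PiLp.add_apply, PiLp.smul_apply, PiLp.single_apply, if_true,
        smul_eq_mul, mul_one, hy]
      ring
    · simp [hj, hxy j hj]
  rw [dist_eq_norm, sub_eq, PiLp.norm_single, Real.norm_eq_abs, abs_div, abs_mul,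
    abs_of_nonneg (by positivity : 0 ≤ 2 * x i), abs_of_pos hr]

end VerticalPoints

section VisualAngle

variable {n : ℕ} {i : Fin n} {x y : EuclideanSpace ℝ (Fin n)}

lemma visualAngleH_of_vertical [Nontrivial (Fin n)] (hx : 0 < x i) (hy : 0 < y i)
    (hxy : ∀ j ≠ i, y j = x j) :
    visualAngleH i x y = Real.arcsin (|x i - y i| / (x i + y i)) :=
  (isGreatest_angle_of_vertical hx hy hxy).csSup_eq

lemma visualAngleH_of_height_ratio [Nontrivial (Fin n)] {r : ℝ} (hr : |r| < Real.pi / 2)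
    (hx : 0 < x i) (hxy : ∀ j ≠ i, y j = x j)
    (hy : y i = x i * (1 + Real.sin r) / (1 - Real.sin r)) :
    visualAngleH i x y = |r| := by
  have cos_pos : 0 < Real.cos r := Real.cos_pos_of_mem_Ioo (abs_lt.mp hr)
  have one_sub_pos : 0 < 1 - Real.sin r :=
    sub_pos.mpr (sin_lt_one_of_cos_ne_zero cos_pos.ne')
  have one_add_pos : 0 < 1 + Real.sin r := by
    have sin_neg_lt_one := sin_lt_one_of_cos_ne_zero (r := -r) (by simpa using cos_pos.ne')
    linarith [Real.sin_neg r]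
  have y_pos : 0 < y i := by rw [hy]; positivity
  have ratio : (x i - y i) / (x i + y i) = -Real.sin r := by
    rw [div_eq_iff (by positivity), hy]
    field_simp
    ring
  have abs_ratio : |x i - y i| / (x i + y i) = Real.sin |r| := by
    rw [← abs_of_pos (add_pos hx y_pos), ← abs_div, ratio, abs_neg,
      Real.abs_sin_eq_sin_abs_of_abs_le_pi (by linarith [Real.pi_pos])]
  rw [visualAngleH_of_vertical hx y_pos hxy, abs_ratio,
    Real.arcsin_sin (by linarith [abs_nonneg r, Real.pi_pos]) hr.le]

end VisualAngle

theorem stmt_17_general {n : ℕ} [Nontrivial (Fin n)] (i : Fin n) (x : EuclideanSpace ℝ (Fin n))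
    (hx : 0 < x i) (r : ℝ) (hr : r ∈ Set.Ico 0 (Real.pi / 2)) (y₁ y₂ : EuclideanSpace ℝ (Fin n))
    (hxy₁ : ∀ j ≠ i, y₁ j = x j) (hy₁ : y₁ i = x i * (1 - Real.sin r) / (1 + Real.sin r))
    (hxy₂ : ∀ j ≠ i, y₂ j = x j) (hy₂ : y₂ i = x i * (1 + Real.sin r) / (1 - Real.sin r)) :
    visualAngleH i x y₁ = r ∧ visualAngleH i x y₂ = r ∧
    dist y₁ (x + (2 * x i * Real.tan r ^ 2) • EuclideanSpace.single i (1 : ℝ)) =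
      2 * x i * Real.tan r / Real.cos r ∧
    dist y₂ (x + (2 * x i * Real.tan r ^ 2) • EuclideanSpace.single i (1 : ℝ)) =
      2 * x i * Real.tan r / Real.cos r := by
  have abs_r : |r| = r := abs_of_nonneg hr.1
  have abs_r_lt : |r| < Real.pi / 2 := abs_r.trans_lt hr.2
  have abs_tan : |Real.tan r| = Real.tan r :=
    abs_of_nonneg (Real.tan_nonneg_of_nonneg_of_le_pi_div_two hr.1 hr.2.le)
  have cos_pos : 0 < Real.cos r := Real.cos_pos_of_mem_Ioo (abs_lt.mp abs_r_lt)
  have hy₁_neg : y₁ i = x i * (1 + Real.sin (-r)) / (1 - Real.sin (-r)) := by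
    rw [hy₁, Real.sin_neg, sub_neg_eq_add, sub_eq_add_neg]
  refine ⟨?_, ?_, ?_, ?_⟩
  · simpa only [abs_neg, abs_r] using
      visualAngleH_of_height_ratio (by rwa [abs_neg]) hx hxy₁ hy₁_neg
  · simpa only [abs_r] using visualAngleH_of_height_ratio abs_r_lt hx hxy₂ hy₂
  · simpa only [Real.tan_neg, neg_sq, abs_neg, abs_tan, Real.cos_neg] using
      dist_add_smul_single_of_height_ratio (by rwa [Real.cos_neg]) hx.le hxy₁ hy₁_neg
  · simpa only [abs_tan] using dist_add_smul_single_of_height_ratio cos_pos hx.le hxy₂ hy₂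

theorem stmt_17 (x : EuclideanSpace ℝ (Fin 2)) (hx : x 1 > 0)
    (r : ℝ) (hr : r ∈ Set.Ioo (0:ℝ) (Real.pi / 2))
    (y₁ y₂ : EuclideanSpace ℝ (Fin 2))
    (hy₁0 : y₁ 0 = x 0) (hy₁1 : y₁ 1 = x 1 * (1 - Real.sin r) / (1 + Real.sin r))
    (hy₂0 : y₂ 0 = x 0) (hy₂1 : y₂ 1 = x 1 * (1 + Real.sin r) / (1 - Real.sin r)) :
    visualAngleH (1 : Fin 2) x y₁ = r ∧ visualAngleH (1 : Fin 2) x y₂ = r ∧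
    dist y₁ (x + (2 * x 1 * Real.tan r ^ 2) • EuclideanSpace.single (1 : Fin 2) (1:ℝ)) =
      2 * x 1 * Real.tan r / Real.cos r ∧
    dist y₂ (x + (2 * x 1 * Real.tan r ^ 2) • EuclideanSpace.single (1 : Fin 2) (1:ℝ)) =
      2 * x 1 * Real.tan r / Real.cos r := by
  exact stmt_17_general 1 x hx r (Set.Ioo_subset_Ico_self hr) y₁ y₂
    (by simpa [Fin.forall_fin_two]) hy₁1 (by simpa [Fin.forall_fin_two]) hy₂1
end

section
/- Let n ≥ 2, x ∈ Hⁿ = {w ∈ ℝⁿ : wₙ > 0} and r ∈ (0,π/2). If y ∈ ℝⁿ satisfies |y − x − (sec²(r) − 1)xₙ·eₙ| < xₙ tan(r), then y ∈ Hⁿ and v(x,y) = sup{∠(x,z,y) : z ∈ ℝⁿ, zₙ = 0} < r. That is, Bⁿ(x + (sec²(r) − 1)xₙ eₙ, xₙ tan(r)) ⊂ B_v(x,r). -/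
/-!
Fix a boundary point `z`. The points `y` with `∠(x,z,y) < r` form a cone with apex `z` around
`a = x - z`, and a ball with center `z + c` lies in this cone once its radius is at most
`‖c‖ * sin (r - ∠(a,c))`. Write `h` for the height of `x`, `s` for the length of the
horizontal part of `a`, and `t = tan r`. For the given ball, `c = a + t² h e`, and the law of sines
turns the condition that its radius `t h` is small enough into
`h * ‖a‖ / cos r + t * h * s ≤ ‖a‖² + t² h²`. Since `‖a‖² = h² + s²`, the difference of the two
sides is `((‖a‖ - h / cos r)² + (s - t h)²) / 2`.

Each angle is thus less than `r`, but the supremum over `z` could still be `r`. The given ball is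
open and varies continuously with `r`, so `y` also lies in the ball belonging to a smaller `r'`, and
then `r'` bounds all the angles.
-/

section InnerProductSpace

open InnerProductGeometry (angle)
open scoped Real RealInnerProductSpace

variable {E : Type*} [NormedAddCommGroup E] [InnerProductSpace ℝ E]

theorem angle_lt_of_norm_sub_lt_norm_mul_sin {c v : E} {β : ℝ} (hβ : β ∈ Set.Icc 0 π)
    (hv : ‖v - c‖ < ‖c‖ * Real.sin β) : angle c v < β := by
  have hsq : ‖v - c‖ ^ 2 < (‖c‖ * Real.sin β) ^ 2 := by gcongr
  have hinner : ‖c‖ * ‖v‖ * Real.cos β < ⟪c, v⟫ := by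
    rw [norm_sub_sq_real, mul_pow, Real.sin_sq, real_inner_comm] at hsq
    linarith [two_mul_le_add_sq ‖v‖ (‖c‖ * Real.cos β)]
  rw [← InnerProductGeometry.cos_angle_mul_norm_mul_norm, mul_comm] at hinner
  have hcos : Real.cos β < Real.cos (angle c v) := lt_of_mul_lt_mul_right hinner (by positivity)
  exact (Real.strictAntiOn_cos.lt_iff_gt hβ
    ⟨InnerProductGeometry.angle_nonneg c v, InnerProductGeometry.angle_le_pi c v⟩).mp hcos

theorem angle_lt_of_norm_sub_lt_norm_mul_sin_sub_angle {a c v : E} {r : ℝ}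
    (hr : r ∈ Set.Icc 0 π) (hv : ‖v - c‖ < ‖c‖ * Real.sin (r - angle a c)) : angle a v < r := by
  have hsin : 0 < Real.sin (r - angle a c) :=
    pos_of_mul_pos_right ((norm_nonneg _).trans_lt hv) (norm_nonneg c)
  have hle : angle a c ≤ r := by
    by_contra! hlt
    have := Real.sin_nonpos_of_nonpos_of_neg_pi_le (sub_nonpos.mpr hlt.le)
      (by linarith [hr.1, InnerProductGeometry.angle_le_pi a c])
    linarith
  have hcv : angle c v < r - angle a c :=
    angle_lt_of_norm_sub_lt_norm_mul_sin
      ⟨sub_nonneg.mpr hle, by linarith [hr.2, InnerProductGeometry.angle_nonneg a c]⟩ hv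
  linarith [InnerProductGeometry.angle_le_angle_add_angle a c v]

theorem norm_mul_norm_mul_sin_sub_angle (a c : E) (r : ℝ) :
    ‖a‖ * (‖c‖ * Real.sin (r - angle a c)) =
      Real.sin r * ⟪a, c⟫ - Real.cos r * ‖a‖ * (Real.sin (angle a (c - a)) * ‖c - a‖) := by
  rw [← InnerProductGeometry.sin_angle_mul_norm_eq_sin_angle_mul_norm,
    InnerProductGeometry.angle_comm c a, ← InnerProductGeometry.cos_angle_mul_norm_mul_norm,
    Real.sin_sub]
  ring

theorem inner_mul_tan_le_norm_mul_sin_sub_angle {a e : E} (he : ‖e‖ = 1) (ha : 0 < ⟪a, e⟫)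
    {r : ℝ} (hr : r ∈ Set.Ioo 0 (π / 2)) :
    ⟪a, e⟫ * Real.tan r ≤ ‖a + (Real.tan r ^ 2 * ⟪a, e⟫) • e‖ *
      Real.sin (r - angle a (a + (Real.tan r ^ 2 * ⟪a, e⟫) • e)) := by
  set h := ⟪a, e⟫ with h_def
  set t := Real.tan r
  set s := ‖a‖ * Real.sin (angle a e) with s_def
  have ht : 0 < t := Real.tan_pos_of_pos_of_lt_pi_div_two hr.1 hr.2
  have hcos : 0 < Real.cos r := Real.cos_pos_of_mem_Ioo ⟨by linarith [hr.1, hr.2], hr.2⟩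
  have hsin : Real.sin r = t * Real.cos r := (Real.tan_mul_cos hcos.ne').symm
  have ha₀ : 0 < ‖a‖ := norm_pos_iff.mpr (by rintro rfl; simp [h_def] at ha)
  have hsec : (1 + t ^ 2) * Real.cos r ^ 2 = 1 := by
    rw [← Real.inv_one_add_tan_sq hcos.ne', mul_inv_cancel₀ (by positivity)]
  have hpyth : h ^ 2 + s ^ 2 = ‖a‖ ^ 2 := by
    rw [h_def, ← InnerProductGeometry.cos_angle_mul_norm_mul_norm, he, s_def]
    linear_combination ‖a‖ ^ 2 * Real.sin_sq_add_cos_sq (angle a e)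
  have hsquares : h * ‖a‖ ≤ Real.cos r * (‖a‖ ^ 2 + t ^ 2 * h ^ 2 - t * h * s) := by
    refine le_of_mul_le_mul_left (sub_nonneg.mp ?_) hcos
    calc 0 ≤ ((Real.cos r * ‖a‖ - h) ^ 2 + (Real.cos r * (s - t * h)) ^ 2) / 2 := by positivity
      _ = _ := by linear_combination Real.cos r ^ 2 / 2 * hpyth - h ^ 2 / 2 * hsec
  refine le_of_mul_le_mul_left ?_ ha₀
  rw [norm_mul_norm_mul_sin_sub_angle, add_sub_cancel_left,
    InnerProductGeometry.angle_smul_right_of_pos _ _ (by positivity), norm_smul, he,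
    Real.norm_of_nonneg (by positivity), inner_add_right, inner_smul_right,
    real_inner_self_eq_norm_sq, hsin]
  calc ‖a‖ * (h * t) = t * (h * ‖a‖) := by ring
    _ ≤ t * (Real.cos r * (‖a‖ ^ 2 + t ^ 2 * h ^ 2 - t * h * s)) := by gcongr
    _ = _ := by rw [← h_def, s_def]; ring

/-- The Euclidean ball that the theorem places inside the visual angle ball of radius `r` about
`x`, for the half space with inner unit normal `e`. Its center is written with `tan² r` instead of
`sec² r - 1`. -/
def inscribedBall (e x : E) (r : ℝ) : Set E :=
  Metric.ball (x + (Real.tan r ^ 2 * ⟪x, e⟫) • e) (⟪x, e⟫ * Real.tan r)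

variable {e x y : E} {r : ℝ}

theorem inner_pos_of_mem_inscribedBall (he : ‖e‖ = 1) (hx : 0 < ⟪x, e⟫)
    (hy : y ∈ inscribedBall e x r) : 0 < ⟪y, e⟫ := by
  rw [inscribedBall, mem_ball_iff_norm'] at hy
  have hdrop : ⟪x, e⟫ + Real.tan r ^ 2 * ⟪x, e⟫ - ⟪y, e⟫ < ⟪x, e⟫ * Real.tan r := by
    calc ⟪x, e⟫ + Real.tan r ^ 2 * ⟪x, e⟫ - ⟪y, e⟫
        = ⟪x + (Real.tan r ^ 2 * ⟪x, e⟫) • e - y, e⟫ := by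
          simp [inner_sub_left, inner_add_left, real_inner_smul_left, he]
      _ ≤ ‖x + (Real.tan r ^ 2 * ⟪x, e⟫) • e - y‖ := by
          simpa [he] using real_inner_le_norm (x + (Real.tan r ^ 2 * ⟪x, e⟫) • e - y) e
      _ < ⟪x, e⟫ * Real.tan r := hy
  have hquad : 0 < 1 - Real.tan r + Real.tan r ^ 2 := by nlinarith [sq_nonneg (Real.tan r - 1)]
  linarith [mul_pos hx hquad]

theorem angle_lt_of_mem_inscribedBall {z : E} (he : ‖e‖ = 1) (hx : 0 < ⟪x, e⟫)
    (hr : r ∈ Set.Ioo 0 (π / 2)) (hy : y ∈ inscribedBall e x r) (hz : ⟪z, e⟫ = 0) :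
    EuclideanGeometry.angle x z y < r := by
  have hxz : ⟪x - z, e⟫ = ⟪x, e⟫ := by rw [inner_sub_left, hz, sub_zero]
  refine angle_lt_of_norm_sub_lt_norm_mul_sin_sub_angle
    (c := x - z + (Real.tan r ^ 2 * ⟪x - z, e⟫) • e) ⟨hr.1.le, by linarith [hr.1, hr.2]⟩ ?_
  calc ‖y - z - (x - z + (Real.tan r ^ 2 * ⟪x - z, e⟫) • e)‖
      = ‖y - (x + (Real.tan r ^ 2 * ⟪x, e⟫) • e)‖ := by
        rw [hxz, sub_add_eq_add_sub, sub_sub_sub_cancel_right]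
    _ < ⟪x - z, e⟫ * Real.tan r := by rwa [hxz, ← mem_ball_iff_norm]
    _ ≤ _ := inner_mul_tan_le_norm_mul_sin_sub_angle he (hxz ▸ hx) hr

theorem exists_lt_mem_inscribedBall (hr : r ∈ Set.Ioo 0 (π / 2)) (hy : y ∈ inscribedBall e x r) :
    ∃ r' ∈ Set.Ioo 0 r, y ∈ inscribedBall e x r' := by
  have htan : ContinuousAt Real.tan r :=
    Real.continuousAt_tan.mpr (Real.cos_pos_of_mem_Ioo ⟨by linarith [hr.1, hr.2], hr.2⟩).ne'
  have hdist : ContinuousAt (fun r' ↦ dist y (x + (Real.tan r' ^ 2 * ⟪x, e⟫) • e)) r := by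
    fun_prop
  have hnhds : ∀ᶠ r' in nhds r, y ∈ inscribedBall e x r' :=
    hdist.eventually_lt (htan.const_mul ⟪x, e⟫) hy
  have hIoo : ∀ᶠ r' in nhdsWithin r (Set.Iio r), r' ∈ Set.Ioo 0 r := Ioo_mem_nhdsLT hr.1
  exact (hIoo.and (hnhds.filter_mono nhdsWithin_le_nhds)).exists

theorem stmt_18_general (he : ‖e‖ = 1) (hx : 0 < ⟪x, e⟫) (hr : r ∈ Set.Ioo 0 (π / 2))
    (hy : y ∈ inscribedBall e x r) :
    0 < ⟪y, e⟫ ∧ sSup {θ : ℝ | ∃ z : E, ⟪z, e⟫ = 0 ∧ θ = EuclideanGeometry.angle x z y} < r := by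
  refine ⟨inner_pos_of_mem_inscribedBall he hx hy, ?_⟩
  obtain ⟨r', hr', hy'⟩ := exists_lt_mem_inscribedBall hr hy
  refine (Real.sSup_le ?_ hr'.1.le).trans_lt hr'.2
  rintro _ ⟨z, hz, rfl⟩
  exact (angle_lt_of_mem_inscribedBall he hx ⟨hr'.1, hr'.2.trans hr.2⟩ hy' hz).le

end InnerProductSpace

theorem stmt_18 (n : ℕ) (hn : 2 ≤ n) (x : EuclideanSpace ℝ (Fin n))
    (hx : x ⟨n - 1, by omega⟩ > 0) (r : ℝ) (hr : r ∈ Set.Ioo (0:ℝ) (Real.pi / 2))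
    (y : EuclideanSpace ℝ (Fin n))
    (hy : dist y (x + (((1 / Real.cos r) ^ 2 - 1) * x ⟨n - 1, by omega⟩) •
        EuclideanSpace.single (⟨n - 1, by omega⟩ : Fin n) (1:ℝ)) <
      x ⟨n - 1, by omega⟩ * Real.tan r) :
    y ⟨n - 1, by omega⟩ > 0 ∧ visualAngleH ⟨n - 1, by omega⟩ x y < r := by
  have hcos : Real.cos r ≠ 0 :=
    (Real.cos_pos_of_mem_Ioo ⟨by linarith [hr.1, hr.2], hr.2⟩).ne'
  have hsec : (1 / Real.cos r) ^ 2 - 1 = Real.tan r ^ 2 := by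
    rw [one_div, inv_pow, ← Real.inv_one_add_tan_sq hcos, inv_inv, add_sub_cancel_left]
  rw [hsec] at hy
  simpa [visualAngleH, EuclideanSpace.inner_single_right] using
    stmt_18_general (e := EuclideanSpace.single (⟨n - 1, by omega⟩ : Fin n) (1 : ℝ))
      (x := x) (y := y) (by simp) (by simpa [EuclideanSpace.inner_single_right] using hx) hr
      (by simpa [inscribedBall, EuclideanSpace.inner_single_right] using hy)
end

section
/- Let n ≥ 2, x ∈ Hⁿ = {w ∈ ℝⁿ : wₙ > 0} and r ∈ (0,π/2). If y ∈ ℝⁿ satisfies |y − x| < xₙ sin(r), then y ∈ Hⁿ and v(x,y) = sup{∠(x,z,y) : z ∈ ℝⁿ, zₙ = 0} < r. That is, Bⁿ(x, xₙ sin r) ⊂ B_v(x,r). -/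
/-!
A point `z` outside the ball of radius `dist x y` about `x` sees that ball under a cone of
half-angle `arcsin (dist x y / dist x z)`, which therefore bounds `∠ x z y`. Every boundary point
`z` of the half space satisfies `dist x z ≥ xₙ`, so `v(x, y) ≤ arcsin (dist x y / xₙ) < r`.
-/

theorem arcsin_lt_of_lt_sin {t r : ℝ} (hr : -(Real.pi / 2) < r) (h : t < Real.sin r) :
    Real.arcsin t < r := by
  rcases le_or_gt r (Real.pi / 2) with hr_le | hr_gt
  · exact (Real.arcsin_lt_iff_lt_sin' ⟨hr, hr_le⟩).2 h
  · exact (Real.arcsin_le_pi_div_two t).trans_lt hr_gt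

section Angle

variable {V P : Type*} [NormedAddCommGroup V] [InnerProductSpace ℝ V]

theorem angle_le_pi_div_two_of_norm_sub_le {u w : V} (h : ‖u - w‖ ≤ ‖u‖) :
    InnerProductGeometry.angle u w ≤ Real.pi / 2 := by
  have h_sq : ‖u - w‖ ^ 2 ≤ ‖u‖ ^ 2 := by gcongr
  have h_inner : 0 ≤ inner ℝ u w := by
    linarith [norm_sub_sq_real u w, sq_nonneg ‖w‖]
  exact Real.arccos_le_pi_div_two.2 (by positivity)

variable [MetricSpace P] [NormedAddTorsor V P]

open EuclideanGeometry

theorem angle_le_pi_div_two_of_dist_le {x y z : P} (h : dist x y ≤ dist x z) :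
    ∠ x z y ≤ Real.pi / 2 := by
  apply angle_le_pi_div_two_of_norm_sub_le
  rwa [vsub_sub_vsub_cancel_right, ← dist_eq_norm_vsub, ← dist_eq_norm_vsub]

theorem sin_angle_mul_dist_le_dist (x y z : P) : Real.sin (∠ x z y) * dist x z ≤ dist x y := by
  calc Real.sin (∠ x z y) * dist x z
      = Real.sin (∠ x y z) * dist x y := by
        rw [angle_comm x z y, dist_comm x z, law_sin]
    _ ≤ dist x y := mul_le_of_le_one_left dist_nonneg (Real.sin_le_one _)

theorem angle_le_arcsin_dist_div_dist {x y z : P} (hxz : x ≠ z) (h : dist x y ≤ dist x z) :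
    ∠ x z y ≤ Real.arcsin (dist x y / dist x z) := by
  have h_sin : Real.sin (∠ x z y) ≤ dist x y / dist x z :=
    (le_div_iff₀ (dist_pos.2 hxz)).2 (sin_angle_mul_dist_le_dist x y z)
  refine (Real.le_arcsin_iff_sin_le' ⟨?_, angle_le_pi_div_two_of_dist_le h⟩).2 h_sin
  linarith [Real.pi_pos, angle_nonneg x z y]

end Angle

theorem sub_apply_le_dist {ι : Type*} [Fintype ι] (x y : EuclideanSpace ℝ ι) (i : ι) :
    x i - y i ≤ dist x y :=
  (Real.sub_le_dist _ _).trans (PiLp.dist_apply_le x y i)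

section HalfSpace

variable {n : ℕ} {i : Fin n} {x y : EuclideanSpace ℝ (Fin n)}

theorem visualAngleH_le_arcsin (hx : 0 < x i) (hxy : dist x y ≤ x i) :
    visualAngleH i x y ≤ Real.arcsin (dist x y / x i) := by
  refine csSup_le ⟨_, 0, rfl, rfl⟩ ?_
  rintro _ ⟨z, hz, rfl⟩
  have hxz : x i ≤ dist x z := by simpa [hz] using sub_apply_le_dist x z i
  calc EuclideanGeometry.angle x z y
      ≤ Real.arcsin (dist x y / dist x z) :=
        angle_le_arcsin_dist_div_dist (dist_pos.1 (hx.trans_le hxz)) (hxy.trans hxz)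
    _ ≤ Real.arcsin (dist x y / x i) := by
        apply Real.monotone_arcsin
        gcongr

theorem stmt_19_general (hx : 0 < x i) {r : ℝ} (hr : 0 < r)
    (hy : dist y x < x i * Real.sin r) : 0 < y i ∧ visualAngleH i x y < r := by
  rw [dist_comm] at hy
  have hxy : dist x y < x i := hy.trans_le (mul_le_of_le_one_right hx.le (Real.sin_le_one r))
  have h_ratio : dist x y / x i < Real.sin r := (div_lt_iff₀' hx).2 hy
  constructor
  · linarith [sub_apply_le_dist x y i]
  · calc visualAngleH i x y
        ≤ Real.arcsin (dist x y / x i) := visualAngleH_le_arcsin hx hxy.le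
      _ < r := arcsin_lt_of_lt_sin (by linarith [Real.pi_pos]) h_ratio

end HalfSpace

theorem stmt_19 (n : ℕ) (hn : 2 ≤ n) (x : EuclideanSpace ℝ (Fin n))
    (hx : x ⟨n - 1, by omega⟩ > 0) (r : ℝ) (hr : r ∈ Set.Ioo (0:ℝ) (Real.pi / 2))
    (y : EuclideanSpace ℝ (Fin n))
    (hy : dist y x < x ⟨n - 1, by omega⟩ * Real.sin r) :
    y ⟨n - 1, by omega⟩ > 0 ∧ visualAngleH ⟨n - 1, by omega⟩ x y < r :=
  stmt_19_general hx hr.1 hy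
end
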